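/- arXiv:1003.4122 — 3 statements merged into one kernel-verified Lean document; each statement's English description precedes it below -/
import Mathlib

section
/- Let A ⊆ ℝ² be a regular compact set whose interior has at most two connected components. If g_A = g_K for some convex body K in ℝ², then A is convex. -/
open MeasureTheory Topology Filter Set

/-- The covariogram of a set `A ⊆ ℝ²`: `g_A(x) = λ₂(A ∩ (A + x))`. -/
noncomputable def covariogram (A : Set (EuclideanSpace ℝ (Fin 2)))
    (x : EuclideanSpace ℝ (Fin 2)) : ℝ :=
  (volume (A ∩ ((· + x) '' A))).toReal

/-! The lower right derivative at `0` of `ε ↦ g_A(0) - g_A(ε v)` is at least the integral, over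
the lines parallel to `v`, of the number of pieces into which the complement of `A` separates the
interior points of `A` on the line (Fatou). For the convex body `K` it is at most the length of
the projection of `K` along `v`. If `g_A = g_K`, then `K - K ⊆ A - A`, so whenever the projection
of `A` is an interval it is at least as long as that of `K`; up to a null set it is also the
projection of `interior A`, which has finitely many components. Hence almost every line meeting
`interior A` counts once only, and the segment joining two interior points `x`, `y` parallel to
`v` must lie in `A`: a point of it outside `A` would make all nearby lines count twice. When `x`
and `y` lie in the two components of `A`, the projections of these share a point, so the argument
applies and the segment connects `A`. Then every projection of `A` is an interval and the argument
applies to all `x`, `y`. -/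

open scoped ENNReal Pointwise

section Variation

lemma measure_sdiff_vadd_congr {E : Type*} [AddGroup E] [MeasurableSpace E]
    [MeasurableConstVAdd E E] {μ : Measure E} {A K : Set E}
    (hA : MeasurableSet A) (hA_fin : μ A ≠ ∞) (hK : MeasurableSet K)
    (h : ∀ w : E, μ (A ∩ (w +ᵥ A)) = μ (K ∩ (w +ᵥ K))) (w : E) :
    μ (A \ (w +ᵥ A)) = μ (K \ (w +ᵥ K)) := by
  have h_inter_fin : μ (A ∩ (w +ᵥ A)) ≠ ∞ := measure_ne_top_of_subset inter_subset_left hA_fin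
  have h_measure : μ A = μ K := by simpa using h 0
  rw [← ENNReal.add_right_inj h_inter_fin, measure_inter_add_sdiff A (hA.const_vadd w), h w,
    measure_inter_add_sdiff K (hK.const_vadd w), h_measure]

variable {E E' : Type*} [AddGroup E] [SMul ℝ E] [MeasurableSpace E]
  [AddGroup E'] [SMul ℝ E'] [MeasurableSpace E']

/-- The lower directional variation of `A` along `v`: the lower right derivative at `0` of
`ε ↦ μ (A \ (A + ε v))`, which for the covariogram `g` of `A` is `g 0 - g (ε v)`. Taking a lower
limit avoids any question of existence and is what Fatou's lemma bounds from below. -/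
noncomputable def directionalVariation (μ : Measure E) (A : Set E) (v : E) : ℝ≥0∞ :=
  liminf (fun ε : ℝ => μ (A \ (ε • v +ᵥ A)) / ENNReal.ofReal ε) (𝓝[>] 0)

lemma le_directionalVariation {μ : Measure E} {A : Set E} {v : E} {c : ℝ≥0∞}
    (h : ∀ᶠ ε : ℝ in 𝓝[>] 0, c * ENNReal.ofReal ε ≤ μ (A \ (ε • v +ᵥ A))) :
    c ≤ directionalVariation μ A v := by
  refine le_liminf_of_le (by isBoundedDefault) ?_
  filter_upwards [h, self_mem_nhdsWithin] with ε hle hε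
  exact (ENNReal.le_div_iff_mul_le (Or.inl (ENNReal.ofReal_pos.2 hε).ne')
    (Or.inl ENNReal.ofReal_ne_top)).2 hle

lemma directionalVariation_le {μ : Measure E} {A : Set E} {v : E} {c : ℝ≥0∞}
    (h : ∀ ε : ℝ, 0 < ε → μ (A \ (ε • v +ᵥ A)) ≤ c * ENNReal.ofReal ε) :
    directionalVariation μ A v ≤ c := by
  refine liminf_le_of_frequently_le' (Eventually.frequently ?_)
  filter_upwards [self_mem_nhdsWithin] with ε hε
  exact ENNReal.div_le_of_le_mul (h ε hε)

lemma directionalVariation_congr [MeasurableConstVAdd E E] {μ : Measure E} {A K : Set E}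
    (hA : MeasurableSet A) (hA_fin : μ A ≠ ∞) (hK : MeasurableSet K)
    (h : ∀ w : E, μ (A ∩ (w +ᵥ A)) = μ (K ∩ (w +ᵥ K))) (v : E) :
    directionalVariation μ A v = directionalVariation μ K v := by
  simp only [directionalVariation, measure_sdiff_vadd_congr hA hA_fin hK h]

lemma directionalVariation_image {μ : Measure E} {ν : Measure E'} {F : Type*} [EquivLike F E E']
    [AddHomClass F E E'] [MulActionHomClass F ℝ E E'] {e : F} (he : MeasurePreserving e μ ν)
    (he_emb : MeasurableEmbedding e) (A : Set E) (v : E) :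
    directionalVariation ν (e '' A) (e v) = directionalVariation μ A v := by
  have h_image (ε : ℝ) : e '' A \ (ε • e v +ᵥ e '' A) = e '' (A \ (ε • v +ᵥ A)) := by
    rw [image_sdiff (EquivLike.injective e), image_vadd_distrib, map_smul]
  have h_measure (B : Set E) : ν (e '' B) = μ B := by
    rw [← he.measure_preimage_emb he_emb, preimage_image_eq _ (EquivLike.injective e)]
  simp only [directionalVariation, h_image, h_measure]

end Variation

section Line

/-- Translation by `ε` cannot cover `[s, s + ε)` from the gap `[c - ε, c)`, so only `B ∩ [c, s)`
can contribute, and it is too small by exactly `ε`. -/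
lemma ofReal_le_volume_sdiff_vadd_inter_Ico {B : Set ℝ} (hB : MeasurableSet B) {c s ε : ℝ}
    (hε : 0 ≤ ε) (hcs : c ≤ s) (h_gap : Ico (c - ε) c ⊆ Bᶜ) (h_full : Ico s (s + ε) ⊆ B) :
    ENNReal.ofReal ε ≤ volume ((B \ (ε +ᵥ B)) ∩ Ico c (s + ε)) := by
  have h_split : Ico s (s + ε) ∪ B ∩ Ico c s = B ∩ Ico c (s + ε) := by
    rw [← Ico_union_Ico_eq_Ico hcs (le_add_of_nonneg_right hε), inter_union_distrib_left,
      inter_eq_right.2 h_full, union_comm]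
  have h_disj : Disjoint (Ico s (s + ε)) (B ∩ Ico c s) :=
    Set.disjoint_left.2 fun r hr hr' => hr'.2.2.not_ge hr.1
  have h_cover : B ∩ Ico c (s + ε) ⊆
      ((B \ (ε +ᵥ B)) ∩ Ico c (s + ε)) ∪ (ε +ᵥ (B ∩ Ico c s)) := by
    rintro r ⟨hrB, hr⟩
    by_cases h : r ∈ ε +ᵥ B
    · obtain ⟨b, hb, rfl⟩ := h
      have hcb : c ≤ b := by
        by_contra! hbc
        exact h_gap ⟨by linarith [hr.1, vadd_eq_add ε b], hbc⟩ hb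
      exact Or.inr (vadd_mem_vadd_set ⟨hb, hcb, by linarith [hr.2, vadd_eq_add ε b]⟩)
    · exact Or.inl ⟨⟨hrB, h⟩, hr⟩
  have h_fin : volume (B ∩ Ico c s) ≠ ∞ :=
    measure_ne_top_of_subset inter_subset_right measure_Ico_lt_top.ne
  refine (ENNReal.add_le_add_iff_right h_fin).1 ?_
  calc ENNReal.ofReal ε + volume (B ∩ Ico c s)
      = volume (B ∩ Ico c (s + ε)) := by
        rw [← h_split, measure_union h_disj (hB.inter measurableSet_Ico), Real.volume_Ico,
          add_sub_cancel_left]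
    _ ≤ volume ((B \ (ε +ᵥ B)) ∩ Ico c (s + ε)) + volume (ε +ᵥ (B ∩ Ico c s)) :=
        (measure_mono h_cover).trans (measure_union_le _ _)
    _ = volume ((B \ (ε +ᵥ B)) ∩ Ico c (s + ε)) + volume (B ∩ Ico c s) := by rw [measure_vadd]

lemma eventually_ofReal_le_volume_sdiff_vadd_inter_Ico {B : Set ℝ} (hB : MeasurableSet B)
    {c s r : ℝ} (hc : c ∉ closure B) (hs : s ∈ interior B) (hcs : c ≤ s) (hsr : s < r) :
    ∀ᶠ ε in 𝓝[>] 0, ENNReal.ofReal ε ≤ volume ((B \ (ε +ᵥ B)) ∩ Ico c r) := by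
  have h_sub : Tendsto (fun ε => c - ε) (𝓝[>] 0) (𝓝 c) :=
    (Continuous.tendsto' (by fun_prop) _ _ (sub_zero c)).mono_left nhdsWithin_le_nhds
  have h_add : Tendsto (fun ε => s + ε) (𝓝[>] 0) (𝓝 s) :=
    (Continuous.tendsto' (by fun_prop) _ _ (add_zero s)).mono_left nhdsWithin_le_nhds
  have h_compl : Bᶜ ∈ 𝓝 c := by rwa [← mem_interior_iff_mem_nhds, interior_compl]
  filter_upwards [self_mem_nhdsWithin,
    (h_sub.Ico tendsto_const_nhds).eventually (eventually_smallSets_subset.2 h_compl),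
    (tendsto_const_nhds.Ico h_add).eventually
      (eventually_smallSets_subset.2 (mem_interior_iff_mem_nhds.1 hs)),
    h_add.eventually_le_const hsr] with ε hε h_gap h_full hr
  exact (ofReal_le_volume_sdiff_vadd_inter_Ico hB hε.le hcs h_gap h_full).trans
    (measure_mono (inter_subset_inter_right _ (Ico_subset_Ico_right hr)))

lemma exists_lt_notMem_closure {B : Set ℝ} (hB : BddBelow B) (p : ℝ) :
    ∃ c < p, c ∉ closure B := by
  obtain ⟨b, hb⟩ := hB.closure
  obtain ⟨c, hc⟩ := exists_lt (min b p)
  exact ⟨c, hc.trans_le (min_le_right _ _), fun h => (hb h).not_gt (hc.trans_le (min_le_left _ _))⟩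

lemma one_le_directionalVariation {B : Set ℝ} (hB : MeasurableSet B) (hB_bdd : BddBelow B)
    (hB_int : (interior B).Nonempty) : 1 ≤ directionalVariation volume B 1 := by
  obtain ⟨p, hp⟩ := hB_int
  obtain ⟨c, hcp, hc⟩ := exists_lt_notMem_closure hB_bdd p
  refine le_directionalVariation ?_
  filter_upwards [eventually_ofReal_le_volume_sdiff_vadd_inter_Ico hB hc hp hcp.le (lt_add_one p)]
    with ε hε
  rw [one_mul, smul_eq_mul, mul_one]
  exact hε.trans (measure_mono inter_subset_left)

lemma two_le_directionalVariation {B : Set ℝ} (hB : MeasurableSet B) (hB_bdd : BddBelow B)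
    {p z q : ℝ} (hp : p ∈ interior B) (hz : z ∉ closure B) (hq : q ∈ interior B)
    (hpz : p < z) (hzq : z ≤ q) : 2 ≤ directionalVariation volume B 1 := by
  obtain ⟨c, hcp, hc⟩ := exists_lt_notMem_closure hB_bdd p
  refine le_directionalVariation ?_
  filter_upwards [eventually_ofReal_le_volume_sdiff_vadd_inter_Ico hB hc hp hcp.le hpz,
    eventually_ofReal_le_volume_sdiff_vadd_inter_Ico hB hz hq hzq (lt_add_one q)] with ε h₁ h₂
  have h_disj : Disjoint ((B \ (ε +ᵥ B)) ∩ Ico c z) ((B \ (ε +ᵥ B)) ∩ Ico z (q + 1)) :=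
    Set.disjoint_left.2 fun r hr hr' => hr.2.2.not_ge hr'.2.1
  rw [two_mul, smul_eq_mul, mul_one]
  calc ENNReal.ofReal ε + ENNReal.ofReal ε
      ≤ volume ((B \ (ε +ᵥ B)) ∩ Ico c z) + volume ((B \ (ε +ᵥ B)) ∩ Ico z (q + 1)) :=
        add_le_add h₁ h₂
    _ = volume ((B \ (ε +ᵥ B)) ∩ Ico c z ∪ (B \ (ε +ᵥ B)) ∩ Ico z (q + 1)) :=
        (measure_union h_disj ((hB.diff (hB.const_vadd ε)).inter measurableSet_Ico)).symm
    _ ≤ volume (B \ (ε +ᵥ B)) := measure_mono (union_subset inter_subset_left inter_subset_left)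

lemma volume_sdiff_vadd_le_of_ordConnected {J : Set ℝ} (hJ : J.OrdConnected) {ε : ℝ}
    (hε : 0 ≤ ε) : volume (J \ (ε +ᵥ J)) ≤ ENNReal.ofReal ε := by
  have h_sub : ∀ r ∈ J \ (ε +ᵥ J), ∀ s ∈ J \ (ε +ᵥ J), s - r ≤ ε := by
    intro r hr s hs
    by_contra! h
    have hJs : s - ε ∈ J := hJ.out hr.1 hs.1 ⟨by linarith, by linarith⟩
    exact hs.2 ⟨s - ε, hJs, add_sub_cancel ε s⟩
  refine (Real.volume_le_diam _).trans (Metric.ediam_le fun r hr s hs => ?_)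
  rw [edist_dist, Real.dist_eq]
  exact ENNReal.ofReal_le_ofReal (abs_sub_le_iff.2 ⟨h_sub s hs r hr, h_sub r hr s hs⟩)

lemma volume_le_of_sub_subset_sub {S T : Set ℝ} (hT : T.OrdConnected) (h : S - S ⊆ T - T) :
    volume S ≤ volume T := by
  refine (Real.volume_le_diam S).trans (Metric.ediam_le fun s hs s' hs' => ?_)
  obtain ⟨t, ht, t', ht', hst : t - t' = s - s'⟩ := h (sub_mem_sub hs hs')
  calc edist s s' = edist t t' := by
        rw [edist_dist, edist_dist, Real.dist_eq, Real.dist_eq, hst]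
    _ = volume (uIcc t t') := by
        rw [Real.volume_interval, edist_dist, Real.dist_eq, abs_sub_comm]
    _ ≤ volume T := measure_mono (hT.uIcc_subset ht ht')

lemma volume_closure_biUnion_of_ordConnected {ι : Type*} {s : Set ι} (hs : s.Finite)
    {T : ι → Set ℝ} (hT : ∀ i ∈ s, (T i).OrdConnected) :
    volume (closure (⋃ i ∈ s, T i)) = volume (⋃ i ∈ s, T i) := by
  rw [hs.closure_biUnion]
  exact measure_congr (Filter.EventuallyEq.countable_bUnion hs.countable fun i hi =>
    closure_ae_eq_of_null_frontier ((hT i hi).convex.addHaar_frontier volume))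

end Line

section Product

lemma prodMk_preimage_sdiff_smul_vadd {F : Type*} [AddGroup F] [SMulZeroClass ℝ F]
    (A : Set (F × ℝ)) (ε : ℝ) (t : F) :
    Prod.mk t ⁻¹' (A \ (ε • ((0 : F), (1 : ℝ)) +ᵥ A)) =
      (Prod.mk t ⁻¹' A) \ (ε • (1 : ℝ) +ᵥ Prod.mk t ⁻¹' A) := by
  ext r
  simp [mem_vadd_set_iff_neg_vadd_mem]

variable {F : Type*} [AddGroup F] [SMulZeroClass ℝ F] [MeasurableSpace F]
  [MeasurableConstVAdd (F × ℝ) (F × ℝ)] {μ : Measure F}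

lemma lintegral_directionalVariation_prodMk_preimage_le {A : Set (F × ℝ)} (hA : MeasurableSet A) :
    ∫⁻ t, directionalVariation volume (Prod.mk t ⁻¹' A) 1 ∂μ ≤
      directionalVariation (μ.prod volume) A (0, 1) := by
  have h_meas (ε : ℝ) : MeasurableSet (A \ (ε • ((0 : F), (1 : ℝ)) +ᵥ A)) :=
    hA.diff (hA.const_vadd _)
  simp only [directionalVariation, ← prodMk_preimage_sdiff_smul_vadd]
  refine (lintegral_liminf_le fun ε =>
    (measurable_measure_prodMk_left (h_meas ε)).div_const _).trans_eq ?_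
  simp only [div_eq_mul_inv, lintegral_mul_const _ (measurable_measure_prodMk_left (h_meas _)),
    ← Measure.prod_apply (h_meas _)]

lemma directionalVariation_le_measure_image_fst {K : Set (F × ℝ)} (hK : MeasurableSet K)
    (hK_conn : ∀ t, (Prod.mk t ⁻¹' K).OrdConnected) :
    directionalVariation (μ.prod volume) K (0, 1) ≤ μ (Prod.fst '' K) := by
  refine directionalVariation_le fun ε hε => ?_
  rw [Measure.prod_apply (hK.diff (hK.const_vadd _)), mul_comm]
  refine (lintegral_mono fun t => ?_).trans
    (lintegral_indicator_const_le (Prod.fst '' K) (ENNReal.ofReal ε))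
  rw [prodMk_preimage_sdiff_smul_vadd, smul_eq_mul, mul_one]
  by_cases ht : t ∈ Prod.fst '' K
  · rw [indicator_of_mem ht]
    exact volume_sdiff_vadd_le_of_ordConnected (hK_conn t) hε.le
  · have h_empty : Prod.mk t ⁻¹' K = ∅ :=
      eq_empty_of_forall_notMem fun r hr => ht ⟨(t, r), hr, rfl⟩
    simp [h_empty]

end Product

lemma ordConnected_prodMk_preimage_of_convex {F : Type*} [AddCommGroup F] [Module ℝ F]
    {K : Set (F × ℝ)} (hK : Convex ℝ K) (t : F) : (Prod.mk t ⁻¹' K).OrdConnected :=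
  (hK.affine_preimage ((AffineMap.const ℝ ℝ t).prod (AffineMap.id ℝ ℝ))).ordConnected

section Segment

lemma measure_add_measure_le_directionalVariation {F : Type*} [TopologicalSpace F] [AddGroup F]
    [SMulZeroClass ℝ F] [MeasurableSpace F] [OpensMeasurableSpace F]
    [MeasurableConstVAdd (F × ℝ) (F × ℝ)] {μ : Measure F} {A : Set (F × ℝ)} (hA : IsClosed A)
    (hA_meas : MeasurableSet A) (hA_bdd : BddBelow (Prod.snd '' A)) {Q : Set F}
    (hQ : MeasurableSet Q)
    (hQ_cut : ∀ t ∈ Q, ∃ p z q : ℝ, p < z ∧ z ≤ q ∧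
      (t, p) ∈ interior A ∧ (t, z) ∉ A ∧ (t, q) ∈ interior A) :
    μ (Prod.fst '' interior A) + μ Q ≤ directionalVariation (μ.prod volume) A (0, 1) := by
  set P : Set F := Prod.fst '' interior A
  have hP : MeasurableSet P := (isOpenMap_fst _ isOpen_interior).measurableSet
  have h_interior (t : F) : Prod.mk t ⁻¹' interior A ⊆ interior (Prod.mk t ⁻¹' A) :=
    preimage_interior_subset_interior_preimage (Continuous.prodMk_right t)
  have h_bdd (t : F) : BddBelow (Prod.mk t ⁻¹' A) :=
    hA_bdd.mono fun r (hr : (t, r) ∈ A) => mem_image_of_mem Prod.snd hr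
  have h_meas (t : F) : MeasurableSet (Prod.mk t ⁻¹' A) := hA_meas.preimage measurable_prodMk_left
  have h_pieces (t : F) : P.indicator (1 : F → ℝ≥0∞) t + Q.indicator 1 t ≤
      directionalVariation volume (Prod.mk t ⁻¹' A) 1 := by
    by_cases htQ : t ∈ Q
    · obtain ⟨p, z, q, hpz, hzq, hp, hz, hq⟩ := hQ_cut t htQ
      have htP : t ∈ P := ⟨(t, p), hp, rfl⟩
      have hz' : z ∉ closure (Prod.mk t ⁻¹' A) := by
        rwa [(hA.preimage (Continuous.prodMk_right t)).closure_eq]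
      simpa [htP, htQ, one_add_one_eq_two] using two_le_directionalVariation (h_meas t) (h_bdd t)
        (h_interior t hp) hz' (h_interior t hq) hpz hzq
    by_cases htP : t ∈ P
    · have h_nonempty : (Prod.mk t ⁻¹' interior A).Nonempty := by
        obtain ⟨⟨t, r⟩, hr, rfl⟩ := htP
        exact ⟨r, hr⟩
      simpa [htP, htQ] using one_le_directionalVariation (h_meas t) (h_bdd t)
        (h_nonempty.mono (h_interior t))
    · simp [htP, htQ]
  calc μ P + μ Q = ∫⁻ t, P.indicator 1 t + Q.indicator 1 t ∂μ := by
        rw [lintegral_add_left (measurable_one.indicator hP), lintegral_indicator_one hP,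
          lintegral_indicator_one hQ]
    _ ≤ ∫⁻ t, directionalVariation volume (Prod.mk t ⁻¹' A) 1 ∂μ := lintegral_mono h_pieces
    _ ≤ directionalVariation (μ.prod volume) A (0, 1) :=
        lintegral_directionalVariation_prodMk_preimage_le hA_meas

lemma segment_subset_of_directionalVariation_le {F : Type*} [NormedAddCommGroup F]
    [NormedSpace ℝ F] [MeasurableSpace F] [BorelSpace F] {μ : Measure F} [μ.IsOpenPosMeasure]
    [IsFiniteMeasureOnCompacts μ] {A : Set (F × ℝ)} (hA : IsCompact A)
    (hA_var : directionalVariation (μ.prod volume) A (0, 1) ≤ μ (Prod.fst '' interior A))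
    {x y : F × ℝ} (hx : x ∈ interior A) (hy : y ∈ interior A) (hxy : x.1 = y.1) :
    segment ℝ x y ⊆ A := by
  wlog hle : x.2 ≤ y.2 generalizing x y
  · rw [segment_symm]
    exact this hy hx hxy.symm (le_of_not_ge hle)
  intro z hz
  by_contra hzA
  obtain ⟨hz₁, hz₂⟩ := Prod.segment_subset _ _ hz
  rw [← hxy, segment_same, mem_singleton_iff] at hz₁
  rw [segment_eq_Icc hle] at hz₂
  have hxz : x.2 < z.2 := hz₂.1.lt_of_ne fun h =>
    hzA (Prod.ext hz₁.symm h ▸ interior_subset hx)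
  set Q : Set F := {t | (t, x.2) ∈ interior A ∧ (t, z.2) ∉ A ∧ (t, y.2) ∈ interior A}
  have hQ : IsOpen Q := (isOpen_interior.preimage (Continuous.prodMk_left x.2)).inter
    ((hA.isClosed.isOpen_compl.preimage (Continuous.prodMk_left z.2)).inter
      (isOpen_interior.preimage (Continuous.prodMk_left y.2)))
  have hQ_pos : 0 < μ Q := hQ.measure_pos μ ⟨x.1, hx, hz₁ ▸ hzA, hxy ▸ hy⟩
  have hP_fin : μ (Prod.fst '' interior A) ≠ ∞ :=
    measure_ne_top_of_subset (image_mono interior_subset)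
      (hA.image continuous_fst).measure_lt_top.ne
  have hQ_le : μ (Prod.fst '' interior A) + μ Q ≤ μ (Prod.fst '' interior A) + 0 := by
    rw [add_zero]
    exact (measure_add_measure_le_directionalVariation hA.isClosed hA.measurableSet
      (hA.image continuous_snd).bddBelow hQ.measurableSet fun _ ⟨hp, hz, hq⟩ =>
        ⟨x.2, z.2, y.2, hxz, hz₂.2, hp, hz, hq⟩).trans hA_var
  exact hQ_pos.not_ge ((ENNReal.add_le_add_iff_left hP_fin).1 hQ_le)

end Segment

section Support

lemma mem_sub_of_nonempty_inter_vadd {E : Type*} [AddGroup E] {A : Set E} {w : E}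
    (h : (A ∩ (w +ᵥ A)).Nonempty) : w ∈ A - A := by
  obtain ⟨_, ha, b, hb, rfl⟩ := h
  exact ⟨w + b, ha, b, hb, add_sub_cancel_right w b⟩

lemma measure_inter_vadd_ne_zero {E : Type*} [TopologicalSpace E] [AddGroup E]
    [ContinuousConstVAdd E E] [MeasurableSpace E] {μ : Measure E} [μ.IsOpenPosMeasure] {K : Set E}
    {k l : E} (hk : k ∈ interior K) (hl : l ∈ interior K) : μ (K ∩ ((k - l) +ᵥ K)) ≠ 0 := by
  have h_open : IsOpen (interior K ∩ ((k - l) +ᵥ interior K)) :=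
    isOpen_interior.inter (isOpen_interior.vadd (k - l))
  have h_mem : k ∈ interior K ∩ ((k - l) +ᵥ interior K) := ⟨hk, l, hl, sub_add_cancel k l⟩
  exact (measure_pos_of_superset
    (inter_subset_inter interior_subset (vadd_set_mono interior_subset))
    (h_open.measure_ne_zero μ ⟨k, h_mem⟩)).ne'

lemma sub_subset_sub_of_measure_inter_vadd_eq {E : Type*} [TopologicalSpace E] [AddGroup E]
    [IsTopologicalAddGroup E] [T2Space E] [MeasurableSpace E] {μ : Measure E} [μ.IsOpenPosMeasure]
    {A K : Set E} (hA : IsCompact A) (hK : K ⊆ closure (interior K))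
    (h : ∀ w : E, μ (A ∩ (w +ᵥ A)) = μ (K ∩ (w +ᵥ K))) : K - K ⊆ A - A := by
  have hA_closed : IsClosed (A - A) := by
    rw [← sub_image_prod]
    exact ((hA.prod hA).image continuous_sub).isClosed
  rintro _ ⟨k, hk, l, hl, rfl⟩
  refine hA_closed.closure_subset (map_mem_closure₂ continuous_sub (hK hk) (hK hl) ?_)
  intro k hk l hl
  refine mem_sub_of_nonempty_inter_vadd (nonempty_of_measure_ne_zero (μ := μ) ?_)
  rw [h]
  exact measure_inter_vadd_ne_zero hk hl

lemma volume_image_le_of_sub_subset_sub {E F : Type*} [AddGroup E] [FunLike F E ℝ]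
    [AddMonoidHomClass F E ℝ] {A K : Set E} (h : K - K ⊆ A - A) (f : F)
    (hf : IsPreconnected (f '' A)) :
    volume (f '' K) ≤ volume (f '' A) := by
  refine volume_le_of_sub_subset_sub hf.ordConnected ?_
  rw [← image_sub, ← image_sub]
  exact image_mono h

lemma volume_image_closure_biUnion_le {X ι : Type*} [TopologicalSpace X] {s : Set ι}
    (hs : s.Finite) {U : ι → Set X} (hU : ∀ i ∈ s, IsPreconnected (U i)) {f : X → ℝ}
    (hf : Continuous f) : volume (f '' closure (⋃ i ∈ s, U i)) ≤ volume (f '' ⋃ i ∈ s, U i) := by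
  refine (measure_mono (image_closure_subset_closure_image hf)).trans_eq ?_
  rw [image_iUnion₂]
  exact volume_closure_biUnion_of_ordConnected hs fun i hi =>
    ((hU i hi).image f hf.continuousOn).ordConnected

end Support

section Connected

variable {X : Type*} [TopologicalSpace X]

lemma biUnion_connectedComponentIn_eq {S s : Set X}
    (h : S ⊆ ⋃ p ∈ s, connectedComponentIn S p) : ⋃ p ∈ s, connectedComponentIn S p = S :=
  (iUnion₂_subset fun p _ => connectedComponentIn_subset S p).antisymm h

lemma closure_connectedComponentIn_subset (S : Set X) (x : X) :
    closure (connectedComponentIn S x) ⊆ connectedComponentIn (closure S) x := by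
  by_cases hx : x ∈ S
  · exact isPreconnected_connectedComponentIn.closure.subset_connectedComponentIn
      (subset_closure (mem_connectedComponentIn hx))
      (closure_mono (connectedComponentIn_subset S x))
  · simp [connectedComponentIn_eq_empty hx]

lemma closure_subset_union_connectedComponentIn {S : Set X} {x y : X}
    (h : S ⊆ connectedComponentIn S x ∪ connectedComponentIn S y) :
    closure S ⊆ connectedComponentIn (closure S) x ∪ connectedComponentIn (closure S) y :=
  (closure_mono h).trans (closure_union.subset.trans
    (union_subset_union (closure_connectedComponentIn_subset S x)
      (closure_connectedComponentIn_subset S y)))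

lemma isPreconnected_union_of_subset_closure {S C D : Set X} (hC : IsPreconnected C)
    (hD : IsPreconnected D) (hS : S ⊆ C ∪ D) (hCD : C ∪ D ⊆ closure S)
    (h : ∀ x ∈ C ∩ S, ∀ y ∈ D ∩ S, ∃ J ⊆ C ∪ D, IsPreconnected J ∧ x ∈ J ∧ y ∈ J) :
    IsPreconnected (C ∪ D) := by
  rcases (C ∩ S).eq_empty_or_nonempty with hCS | ⟨x, hx⟩
  · have hSD : S ⊆ D := fun z hz =>
      (hS hz).resolve_left fun hzC => (hCS ▸ ⟨hzC, hz⟩ : z ∈ (∅ : Set X))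
    exact hD.subset_closure subset_union_right (hCD.trans (closure_mono hSD))
  rcases (D ∩ S).eq_empty_or_nonempty with hDS | ⟨y, hy⟩
  · have hSC : S ⊆ C := fun z hz =>
      (hS hz).resolve_right fun hzD => (hDS ▸ ⟨hzD, hz⟩ : z ∈ (∅ : Set X))
    exact hC.subset_closure subset_union_left (hCD.trans (closure_mono hSC))
  obtain ⟨J, hJ, hJ_conn, hxJ, hyJ⟩ := h x hx y hy
  have h_eq : (C ∪ J) ∪ D = C ∪ D := by rw [union_right_comm, union_eq_left.2 hJ]
  rw [← h_eq]
  exact (hC.union x hx.1 hxJ hJ_conn).union y (Or.inr hyJ) hy.1 hD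

end Connected

section Segment

variable {E : Type*} [TopologicalSpace E] [AddCommGroup E] [Module ℝ E] [ContinuousAdd E]

lemma convex_closure_of_segment_subset [ContinuousConstSMul ℝ E] {S : Set E}
    (h : ∀ x ∈ S, ∀ y ∈ S, segment ℝ x y ⊆ closure S) : Convex ℝ (closure S) := by
  intro x hx y hy a b ha hb hab
  exact isClosed_closure.closure_subset (map_mem_closure₂
    (f := fun x y => a • x + b • y) (by fun_prop) hx hy
    fun x hx y hy => h x hx y hy ⟨a, b, ha, hb, hab, rfl⟩)

/-- The image of `A` under a functional with `f x = f y` is connected as soon as `x` and `y` lie in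
the two connected components of `A`, so the hypothesis first produces a bridge between these. -/
lemma isPreconnected_of_segment_subset [ContinuousSMul ℝ E] {S A : Set E} (hSA : S ⊆ A)
    (hAS : A ⊆ closure S) {p q : E}
    (hpq : A ⊆ connectedComponentIn A p ∪ connectedComponentIn A q)
    (h : ∀ x ∈ S, ∀ y ∈ S, (∀ f : E →L[ℝ] ℝ, f x = f y → IsPreconnected (f '' A)) →
      segment ℝ x y ⊆ A) : IsPreconnected A := by
  set C := connectedComponentIn A p
  set D := connectedComponentIn A q
  have hC : IsPreconnected C := isPreconnected_connectedComponentIn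
  have hD : IsPreconnected D := isPreconnected_connectedComponentIn
  have hCD : C ∪ D = A := (union_subset (connectedComponentIn_subset A p)
    (connectedComponentIn_subset A q)).antisymm hpq
  have h_bridge : ∀ x ∈ C ∩ S, ∀ y ∈ D ∩ S, segment ℝ x y ⊆ C ∪ D := by
    rintro x ⟨hxC, hx⟩ y ⟨hyD, hy⟩
    rw [hCD]
    refine h x hx y hy fun f hf => ?_
    rw [← hCD, image_union]
    exact (hC.image f f.continuous.continuousOn).union (f x) (mem_image_of_mem f hxC)
      (hf ▸ mem_image_of_mem f hyD) (hD.image f f.continuous.continuousOn)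
  rw [← hCD]
  exact isPreconnected_union_of_subset_closure hC hD (hSA.trans hpq) (hCD.subset.trans hAS)
    fun x hx y hy => ⟨segment ℝ x y, h_bridge x hx y hy, (convex_segment x y).isPreconnected,
      left_mem_segment ℝ x y, right_mem_segment ℝ x y⟩

end Segment

section Plane

variable {E : Type*} [NormedAddCommGroup E] [InnerProductSpace ℝ E] [FiniteDimensional ℝ E]
  [MeasurableSpace E] [BorelSpace E]

lemma exists_measurePreserving_prod_fst_eq (hE : Module.finrank ℝ E = 2) (x y : E) :
    ∃ e : E ≃L[ℝ] ℝ × ℝ, MeasurePreserving e ∧ (e x).1 = (e y).1 := by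
  obtain ⟨u, hu, hu_ne⟩ : ∃ u ∈ (innerₛₗ ℝ (x - y)).ker, u ≠ 0 :=
    Submodule.exists_mem_ne_zero_of_ne_bot (LinearMap.ker_ne_bot_of_finrank_lt (by simp [hE]))
  have h_orth : Orthonormal ℝ (({0} : Set (Fin 2)).domRestrict fun _ => ‖u‖⁻¹ • u) := by
    refine ⟨fun _ => ?_, fun i j hij => absurd (Subsingleton.elim i j) hij⟩
    simp [norm_smul, hu_ne]
  obtain ⟨b, hb⟩ := h_orth.exists_orthonormalBasis_extension_of_card_eq (by simp [hE])
  refine ⟨(b.repr.toContinuousLinearEquiv.trans (EuclideanSpace.equiv (Fin 2) ℝ)).trans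
    (ContinuousLinearEquiv.finTwoArrow ℝ ℝ), ?_, ?_⟩
  · exact (volume_preserving_finTwoArrow ℝ).comp
      ((PiLp.volume_preserving_ofLp (Fin 2)).comp b.measurePreserving_repr)
  · have h_inner : inner ℝ (b 0) (x - y) = 0 := by
      rw [hb 0 rfl, real_inner_smul_left, real_inner_comm]
      exact mul_eq_zero_of_right _ hu
    change b.repr x 0 = b.repr y 0
    rw [b.repr_apply_apply, b.repr_apply_apply, ← sub_eq_zero, ← inner_sub_right, h_inner]

lemma segment_subset_of_measure_inter_vadd_eq (hE : Module.finrank ℝ E = 2) {A K : Set E}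
    (hA : IsCompact A) (hK : MeasurableSet K) (hK_conv : Convex ℝ K)
    (h : ∀ w : E, volume (A ∩ (w +ᵥ A)) = volume (K ∩ (w +ᵥ K))) {x y : E}
    (hx : x ∈ interior A) (hy : y ∈ interior A)
    (h_proj : ∀ f : E →L[ℝ] ℝ, f x = f y → volume (f '' K) ≤ volume (f '' interior A)) :
    segment ℝ x y ⊆ A := by
  obtain ⟨e, he, hexy⟩ := exists_measurePreserving_prod_fst_eq hE x y
  have he_emb : MeasurableEmbedding e := e.toHomeomorph.measurableEmbedding
  have h_int : e '' interior A = interior (e '' A) := e.toHomeomorph.image_interior A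
  have h_fst (B : Set E) : Prod.fst '' (e '' B) = (ContinuousLinearMap.fst ℝ ℝ ℝ ∘L e) '' B :=
    image_image _ _ _
  have h_transfer (B : Set E) :
      directionalVariation volume (e '' B) (0, 1) =
        directionalVariation volume B (e.symm (0, 1)) := by
    rw [← directionalVariation_image he he_emb, e.apply_symm_apply]
  have h_var : directionalVariation volume (e '' A) (0, 1) ≤
      volume (Prod.fst '' interior (e '' A)) := calc
    directionalVariation volume (e '' A) (0, 1)
      = directionalVariation volume (e '' K) (0, 1) := by
        rw [h_transfer, h_transfer,
          directionalVariation_congr hA.measurableSet hA.measure_lt_top.ne hK h]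
    _ ≤ volume (Prod.fst '' (e '' K)) :=
        directionalVariation_le_measure_image_fst (he_emb.measurableSet_image.2 hK)
          (ordConnected_prodMk_preimage_of_convex (hK_conv.linear_image e.toLinearMap))
    _ ≤ volume (Prod.fst '' interior (e '' A)) := by
        rw [← h_int, h_fst, h_fst]
        exact h_proj _ hexy
  have h_segment : e '' segment ℝ x y ⊆ e '' A := by
    refine (image_segment ℝ (e : E →ₗ[ℝ] ℝ × ℝ).toAffineMap x y).subset.trans ?_
    exact segment_subset_of_directionalVariation_le (hA.image e.continuous) h_var
      (h_int ▸ mem_image_of_mem e hx) (h_int ▸ mem_image_of_mem e hy) hexy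
  exact (image_subset_image_iff e.injective).1 h_segment

lemma segment_subset_of_isPreconnected_image (hE : Module.finrank ℝ E = 2) {A K : Set E}
    (hA : IsCompact A) (hA_reg : A = closure (interior A)) {s : Set E} (hs : s.Finite)
    (hA_comp : interior A ⊆ ⋃ p ∈ s, connectedComponentIn (interior A) p)
    (hK : IsCompact K) (hK_conv : Convex ℝ K) (hK_int : (interior K).Nonempty)
    (h : ∀ w : E, volume (A ∩ (w +ᵥ A)) = volume (K ∩ (w +ᵥ K))) {x y : E}
    (hx : x ∈ interior A) (hy : y ∈ interior A)
    (h_conn : ∀ f : E →L[ℝ] ℝ, f x = f y → IsPreconnected (f '' A)) :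
    segment ℝ x y ⊆ A := by
  have hK_reg : K ⊆ closure (interior K) :=
    hK_conv.closure_interior_eq_closure_of_nonempty_interior hK_int ▸ subset_closure
  have h_sub : K - K ⊆ A - A := sub_subset_sub_of_measure_inter_vadd_eq hA hK_reg h
  refine segment_subset_of_measure_inter_vadd_eq hE hA hK.measurableSet hK_conv h hx hy
    fun f hf => ?_
  calc volume (f '' K) ≤ volume (f '' A) := volume_image_le_of_sub_subset_sub h_sub f (h_conn f hf)
    _ = volume (f '' closure (⋃ p ∈ s, connectedComponentIn (interior A) p)) := by
        rw [biUnion_connectedComponentIn_eq hA_comp, ← hA_reg]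
    _ ≤ volume (f '' ⋃ p ∈ s, connectedComponentIn (interior A) p) :=
        volume_image_closure_biUnion_le hs
          (fun _ _ => isPreconnected_connectedComponentIn) f.continuous
    _ = volume (f '' interior A) := by rw [biUnion_connectedComponentIn_eq hA_comp]

end Plane

lemma volume_inter_vadd_eq_of_covariogram_eq {A K : Set (EuclideanSpace ℝ (Fin 2))}
    (hA : volume A ≠ ∞) (hK : volume K ≠ ∞) (h : covariogram A = covariogram K)
    (w : EuclideanSpace ℝ (Fin 2)) : volume (A ∩ (w +ᵥ A)) = volume (K ∩ (w +ᵥ K)) := by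
  have h_vadd (B : Set (EuclideanSpace ℝ (Fin 2))) : (· + w) '' B = w +ᵥ B :=
    image_congr fun b _ => add_comm b w
  rw [← ENNReal.toReal_eq_toReal_iff' (measure_ne_top_of_subset inter_subset_left hA)
    (measure_ne_top_of_subset inter_subset_left hK), ← h_vadd, ← h_vadd]
  exact congrFun h w

theorem covariogram_convex_of_two_components_general {A : Set (EuclideanSpace ℝ (Fin 2))}
    (hA : IsCompact A) (hreg : A = closure (interior A))
    (hcomp_int : ∃ s : Set (EuclideanSpace ℝ (Fin 2)), s.Finite ∧
      interior A ⊆ ⋃ p ∈ s, connectedComponentIn (interior A) p)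
    (hcomp : ∃ p q : EuclideanSpace ℝ (Fin 2),
      A ⊆ connectedComponentIn A p ∪ connectedComponentIn A q)
    (hK : ∃ K : Set (EuclideanSpace ℝ (Fin 2)), IsCompact K ∧ Convex ℝ K ∧
      (interior K).Nonempty ∧ covariogram A = covariogram K) :
    Convex ℝ A := by
  obtain ⟨K, hK, hK_conv, hK_int, hg⟩ := hK
  obtain ⟨s, hs, hA_comp⟩ := hcomp_int
  obtain ⟨p, q, hpq⟩ := hcomp
  have h_segment : ∀ x ∈ interior A, ∀ y ∈ interior A,
      (∀ f : EuclideanSpace ℝ (Fin 2) →L[ℝ] ℝ, f x = f y → IsPreconnected (f '' A)) →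
        segment ℝ x y ⊆ A := fun x hx y hy =>
    segment_subset_of_isPreconnected_image (by simp) hA hreg hs hA_comp hK hK_conv hK_int
      (volume_inter_vadd_eq_of_covariogram_eq hA.measure_lt_top.ne hK.measure_lt_top.ne hg) hx hy
  have hA_conn : IsPreconnected A :=
    isPreconnected_of_segment_subset interior_subset hreg.subset hpq h_segment
  rw [hreg]
  exact convex_closure_of_segment_subset fun x hx y hy => hreg ▸ h_segment x hx y hy fun f _ =>
    hA_conn.image f f.continuous.continuousOn

/-- If `A ⊆ ℝ²` is a regular compact set whose interior has at most two connected
components, and `g_A = g_K` for some convex body `K`, then `A` is convex. -/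
theorem covariogram_convex_of_two_components (A : Set (EuclideanSpace ℝ (Fin 2)))
    (hA : IsCompact A) (hreg : A = closure (interior A))
    (hcomp : ∃ x y : EuclideanSpace ℝ (Fin 2),
      interior A ⊆ connectedComponentIn (interior A) x ∪ connectedComponentIn (interior A) y)
    (hK : ∃ K : Set (EuclideanSpace ℝ (Fin 2)), IsCompact K ∧ Convex ℝ K ∧
      (interior K).Nonempty ∧ covariogram A = covariogram K) :
    Convex ℝ A := by
  obtain ⟨x, y, hxy⟩ := hcomp
  exact covariogram_convex_of_two_components_general hA hreg ⟨{x, y}, by simp, by simpa using hxy⟩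
    ⟨x, y, by simpa only [← hreg] using closure_subset_union_connectedComponentIn hxy⟩ hK
end

section
/- Let A ⊆ ℝ² be a compact set that is regular (equal to the closure of its interior) and whose topological boundary is the union of finitely many closed nondegenerate line segments (so that ∂A consists of finitely many disjoint simple closed polygonal curves, each with finitely many edges). If g_A = g_K for some convex body K in ℝ², then A is convex. -/
open MeasureTheory Topology Filter Set

/-!
It suffices to show that `A` lies on one side of the line through each of its edges: then `frontier
A` does not meet the interior of the convex hull of `A`, so this interior is contained in `A`.

Choose coordinates in which the given edge is horizontal. Let `Λ s` be the total length of the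
horizontal edges of `A` at height `s`, let `[α, β]` be the range of heights of `A`, and let `L` and
`ℓ` be the lengths of the highest and lowest horizontal slices of `K`. The second difference
`2 g(r, 0) - g(r, h) - g(r, -h)` of the covariogram is the integral of the product of the increments
of an indicator function along two opposite sides of a rectangle. With `h = ε * r`, and `r` and then
`ε` tending to `0`, comparing the leading terms for `A` and `K` gives `∑ s, Λ s ≤ L + ℓ`.

Integrating `g` along horizontal lines gives the autocorrelation of the function `s ↦ length of the
slice at height s`. That function jumps by at most `Λ s` at `s` when computed for `A`, while it is
concave on its support when computed for `K`. Comparing the expansions of the autocorrelation near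
both ends of its support gives `(L + ℓ) ^ 2 ≤ ∑ s, Λ s ^ 2 + 2 * Λ α * Λ β`. Therefore
`(Λ α + Λ β) * Λ γ = 0` for `γ` strictly between `α` and `β`. If the given edge were at such a
height `γ`, then `Λ α = Λ β = 0`, so the extreme slices of `A` would be finite. Since
`A - A = K - K` is the support of `g`, the extreme slices of `K` would be finite as well, and
`∑ s, Λ s ≤ L + ℓ = 0` would contradict `0 < Λ γ`.
-/

namespace PlanarCovariogram

open scoped Pointwise

section Convexity

variable {X : Type*} [TopologicalSpace X]

lemma subset_interior_or_subset_compl_closure {S A : Set X} (hS : IsPreconnected S)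
    (hd : Disjoint S (frontier A)) : S ⊆ interior A ∨ S ⊆ (closure A)ᶜ := by
  refine hS.subset_or_subset isOpen_interior isClosed_closure.isOpen_compl
    (disjoint_compl_right_iff_subset.2 (interior_subset.trans subset_closure)) fun y hy => ?_
  by_cases hc : y ∈ closure A
  · exact Or.inl (by_contra fun hi => hd.le_bot ⟨hy, hc, hi⟩)
  · exact Or.inr hc

variable {E : Type*} [NormedAddCommGroup E] [NormedSpace ℝ E] {A : Set E} {f : E →L[ℝ] ℝ}

lemma notMem_interior_convexHull_of_isMaxOn (hf : f ≠ 0) {z : E} (h : IsMaxOn f A z) :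
    z ∉ interior (convexHull ℝ A) := fun hz => by
  have hle : f '' convexHull ℝ A ⊆ Iic (f z) :=
    image_subset_iff.2 (convexHull_min h (convex_halfSpace_le f.isLinear _))
  have hint := interior_mono hle ((f.isOpenMap_of_ne_zero hf).image_interior_subset _ ⟨z, hz, rfl⟩)
  rw [interior_Iic] at hint
  exact lt_irrefl (f z) hint

lemma convex_of_disjoint_frontier_interior_convexHull (hA : IsClosed A)
    (hne : (interior A).Nonempty) (hd : Disjoint (frontier A) (interior (convexHull ℝ A))) :
    Convex ℝ A := by
  have hconv := convex_convexHull ℝ A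
  have hmono : interior A ⊆ interior (convexHull ℝ A) := interior_mono (subset_convexHull ℝ A)
  have hsub : interior (convexHull ℝ A) ⊆ A := by
    refine ((subset_interior_or_subset_compl_closure hconv.interior.isPreconnected
      hd.symm).resolve_right fun h => ?_).trans interior_subset
    obtain ⟨x, hx⟩ := hne
    exact h (hmono hx) (subset_closure (interior_subset hx))
  have hhull : convexHull ℝ A ⊆ A := by
    refine subset_closure.trans ?_
    rw [← hconv.closure_interior_eq_closure_of_nonempty_interior (hne.mono hmono)]
    exact closure_minimal hsub hA
  rwa [hhull.antisymm (subset_convexHull ℝ A)] at hconv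

lemma inter_le_subset_closure_inter_lt (hf : f ≠ 0) {U : Set E} (hU : IsOpen U) (c : ℝ) :
    U ∩ {y | c ≤ f y} ⊆ closure (U ∩ {y | c < f y}) := by
  have h : {y | c ≤ f y} = closure (f ⁻¹' Ioi c) := by
    rw [← (f.isOpenMap_of_ne_zero hf).preimage_closure_eq_closure_preimage f.continuous,
      closure_Ioi]
    rfl
  rw [h]
  exact hU.inter_closure

lemma inter_lt_subset_interior_or_subset_compl_closure {U : Set E} (hU : Convex ℝ U) {c : ℝ}
    (hfr : ∀ y ∈ U, y ∈ frontier A → f y = c) :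
    U ∩ {y | c < f y} ⊆ interior A ∨ U ∩ {y | c < f y} ⊆ (closure A)ᶜ :=
  subset_interior_or_subset_compl_closure
    (hU.inter (convex_halfSpace_gt f.isLinear c)).isPreconnected
    (disjoint_left.2 fun y hy hyA => hy.2.ne' (hfr y hy.1 hyA))

lemma eventually_mem_iff_halfSpace (hreg : A = closure (interior A)) (hf : f ≠ 0) {x : E}
    (hx : x ∈ frontier A) (hfr : ∀ᶠ y in 𝓝 x, y ∈ frontier A → f y = f x) :
    (∀ᶠ y in 𝓝 x, (y ∈ A ↔ f y ≤ f x)) ∨ ∀ᶠ y in 𝓝 x, (y ∈ A ↔ f x ≤ f y) := by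
  obtain ⟨ε, hε, hball⟩ := Metric.eventually_nhds_iff_ball.1 hfr
  set U := Metric.ball x ε
  have hU : U ∈ 𝓝 x := Metric.ball_mem_nhds x hε
  have habove : U ∩ {y | f x ≤ f y} ⊆ closure (U ∩ {y | f x < f y}) :=
    inter_le_subset_closure_inter_lt hf Metric.isOpen_ball _
  have hbelow : U ∩ {y | f y ≤ f x} ⊆ closure (U ∩ {y | f y < f x}) := by
    simpa using inter_le_subset_closure_inter_lt (neg_ne_zero.2 hf) Metric.isOpen_ball (-f x)
  have hcover : ∀ y ∈ U, y ∈ closure (U ∩ {y | f x < f y}) ∨ y ∈ closure (U ∩ {y | f y < f x}) :=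
    fun y hy => (le_total (f x) (f y)).imp (fun h => habove ⟨hy, h⟩) fun h => hbelow ⟨hy, h⟩
  have hlt := inter_lt_subset_interior_or_subset_compl_closure (f := -f) (convex_ball x ε)
    (c := -f x) fun y hy hyA => congrArg Neg.neg (hball y hy hyA)
  simp only [neg_apply, neg_lt_neg_iff] at hlt
  rcases inter_lt_subset_interior_or_subset_compl_closure (convex_ball x ε) hball with h1 | h1 <;>
    rcases hlt with h2 | h2
  · refine (hx.2 (mem_interior_iff_mem_nhds.2 (mem_of_superset hU fun y hy => ?_))).elim
    exact hreg ▸ (hcover y hy).elim (closure_mono h1 ·) (closure_mono h2 ·)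
  · refine Or.inr (mem_of_superset hU fun y hy => ⟨fun hyA => ?_, fun hle => ?_⟩)
    · exact not_lt.1 fun hlt => h2 ⟨hy, hlt⟩ (subset_closure hyA)
    · exact hreg ▸ closure_mono h1 (habove ⟨hy, hle⟩)
  · refine Or.inl (mem_of_superset hU fun y hy => ⟨fun hyA => ?_, fun hle => ?_⟩)
    · exact not_lt.1 fun hlt => h1 ⟨hy, hlt⟩ (subset_closure hyA)
    · exact hreg ▸ closure_mono h2 (hbelow ⟨hy, hle⟩)
  · have hxA : x ∈ closure (interior A) := by
      rw [← hreg, ← (hreg ▸ isClosed_closure : IsClosed A).closure_eq]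
      exact hx.1
    obtain ⟨z, hz, hzA⟩ := mem_closure_iff_nhds.1 hxA U hU
    have hzc : z ∈ closure (closure A)ᶜ :=
      (hcover z hz).elim (closure_mono h1 ·) (closure_mono h2 ·)
    rw [closure_compl] at hzc
    exact (hzc (interior_mono subset_closure hzA)).elim

end Convexity

section Covariogram

variable {G : Type*} [AddCommGroup G]

/-- The increment `1_A(x) - 1_A(x + u)` of the indicator function of `A`. -/
noncomputable def jump (A : Set G) (u x : G) : ℝ := A.indicator 1 x - A.indicator 1 (x + u)

/-- The product of the increments of the indicator function of `A` along two opposite sides of the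
parallelogram with vertex `x` and sides `u` and `v`. -/
noncomputable def jumpProduct (A : Set G) (u v x : G) : ℝ := jump A u x * jump A u (x + v)

variable {A K : Set G} {x u v : G}

lemma jump_eq_zero (h : x ∈ A ↔ x + u ∈ A) : jump A u x = 0 := by
  by_cases hx : x ∈ A
  · simp [jump, hx, h.1 hx]
  · simp [jump, hx, mt h.2 hx]

lemma jump_eq_one (h : x ∈ A) (h' : x + u ∉ A) : jump A u x = 1 := by
  simp [jump, h, h']

lemma jump_eq_neg_one (h : x ∉ A) (h' : x + u ∈ A) : jump A u x = -1 := by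
  simp [jump, h, h']

lemma jump_nonneg (h : x + u ∈ A → x ∈ A) : 0 ≤ jump A u x := by
  by_cases h' : x + u ∈ A
  · rw [jump_eq_zero (iff_of_true (h h') h')]
  · simp [jump, h', indicator_nonneg]

lemma jump_nonpos (h : x ∈ A → x + u ∈ A) : jump A u x ≤ 0 := by
  by_cases h' : x ∈ A
  · rw [jump_eq_zero (iff_of_true h' (h h'))]
  · simp [jump, h', indicator_nonneg]

lemma abs_jump_le_one : |jump A u x| ≤ 1 := by
  by_cases h : x ∈ A <;> by_cases h' : x + u ∈ A <;> simp [jump, h, h']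

lemma abs_jumpProduct_le_one : |jumpProduct A u v x| ≤ 1 := by
  rw [jumpProduct, abs_mul]
  exact mul_le_one₀ abs_jump_le_one (abs_nonneg _) abs_jump_le_one

lemma jumpProduct_eq_zero (h : x ∈ A ↔ x + u ∈ A) : jumpProduct A u v x = 0 := by
  rw [jumpProduct, jump_eq_zero h, zero_mul]

lemma jumpProduct_nonneg_of_mem_iff_le {f : G →+ ℝ} {c : ℝ}
    (h : ∀ y ∈ ({x, x + u, x + v, x + v + u} : Set G), (y ∈ A ↔ f y ≤ c)) :
    0 ≤ jumpProduct A u v x := by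
  simp only [mem_insert_iff, mem_singleton_iff, forall_eq_or_imp, forall_eq, map_add] at h
  obtain ⟨h₁, h₂, h₃, h₄⟩ := h
  rcases le_total 0 (f u) with hu | hu
  · exact mul_nonneg (jump_nonneg fun hy => h₁.2 (by linarith [h₂.1 hy]))
      (jump_nonneg fun hy => h₃.2 (by linarith [h₄.1 hy]))
  · exact mul_nonneg_of_nonpos_of_nonpos (jump_nonpos fun hy => h₂.2 (by linarith [h₁.1 hy]))
      (jump_nonpos fun hy => h₄.2 (by linarith [h₃.1 hy]))

lemma jumpProduct_eq_one_of_mem_iff_le {f : G →+ ℝ} {c : ℝ}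
    (h : ∀ y ∈ ({x, x + u, x + v, x + v + u} : Set G), (y ∈ A ↔ f y ≤ c)) (hv : f v = 0)
    (hu : f x ≤ c ↔ c < f (x + u)) : jumpProduct A u v x = 1 := by
  simp only [mem_insert_iff, mem_singleton_iff, forall_eq_or_imp, forall_eq, map_add, hv,
    add_zero] at h
  rw [map_add] at hu
  obtain ⟨h₁, h₂, h₃, h₄⟩ := h
  by_cases hx : f x ≤ c
  · have hxu := (hu.1 hx).not_ge
    rw [jumpProduct, jump_eq_one (h₁.2 hx) (mt h₂.1 hxu), jump_eq_one (h₃.2 hx) (mt h₄.1 hxu),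
      one_mul]
  · have hxu := not_lt.1 (mt hu.2 hx)
    rw [jumpProduct, jump_eq_neg_one (mt h₁.1 hx) (h₂.2 hxu),
      jump_eq_neg_one (mt h₃.1 hx) (h₄.2 hxu), neg_one_mul, neg_neg]

lemma jumpProduct_expand (A : Set G) (u v y : G) : jumpProduct A u v y =
    (A.indicator 1 (y + 0) * A.indicator 1 (y + v) -
      A.indicator 1 (y + 0) * A.indicator 1 (y + (v + u))) -
    (A.indicator 1 (y + u) * A.indicator 1 (y + v) -
      A.indicator 1 (y + u) * A.indicator 1 (y + (v + u))) := by
  simp only [jumpProduct, jump, add_zero, add_assoc]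
  ring

/-- The points `x` such that translation by `u` moves both `x ∈ A` and `x + v ∈ A` out of `A`. -/
def exitSet (A : Set G) (u v : G) : Set G := {x | x ∈ A ∧ x + v ∈ A ∧ x + u ∉ A ∧ x + v + u ∉ A}

lemma jumpProduct_le_indicator_exitSet (A : Set G) (u v x : G) : jumpProduct A u v x ≤
    (exitSet A u v).indicator 1 x + (exitSet A (-u) v).indicator 1 (x + u) := by
  have hcomm : x + u + v = x + v + u := add_right_comm x u v
  by_cases h1 : x ∈ A <;> by_cases h2 : x + v ∈ A <;> by_cases h3 : x + u ∈ A <;>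
    by_cases h4 : x + v + u ∈ A <;> simp [jumpProduct, jump, exitSet, h1, h2, h3, h4, hcomm]

lemma measurableSet_exitSet [MeasurableSpace G] [MeasurableAdd G] (hA : MeasurableSet A) (u v : G) :
    MeasurableSet (exitSet A u v) :=
  hA.inter <| (measurable_add_const v hA).inter <| (measurable_add_const u hA).compl.inter
    (((measurable_add_const u).comp (measurable_add_const v)) hA).compl

lemma isCompact_sub_self [TopologicalSpace G] [IsTopologicalAddGroup G] (hK : IsCompact K) :
    IsCompact (K - K) :=
  sub_eq_add_neg K K ▸ hK.add hK.neg

variable [MeasureSpace G]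

/-- The covariogram `x ↦ λ(A ∩ (A - x))` of a subset of an additive group. It is an even function,
so the sign of the translation is immaterial. -/
noncomputable def cov (A : Set G) (x : G) : ℝ := volume.real (A ∩ (· + x) ⁻¹' A)

lemma integral_indicator_mul [MeasurableAdd G] [(volume : Measure G).IsAddRightInvariant]
    (hA : MeasurableSet A) (u v : G) :
    ∫ y, A.indicator (1 : G → ℝ) (y + u) * A.indicator (1 : G → ℝ) (y + v) = cov A (v - u) := by
  have hm := hA.inter (measurable_add_const (v - u) hA)
  rw [cov, ← integral_indicator_one hm, inter_indicator_one,
    ← integral_add_right_eq_self (A.indicator (1 : G → ℝ) * _) u]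
  congr 1 with y
  change _ = A.indicator (1 : G → ℝ) (y + u) * A.indicator (1 : G → ℝ) (y + u + (v - u))
  rw [add_assoc, add_sub_cancel]

variable [TopologicalSpace G] [IsTopologicalAddGroup G] [T2Space G]
  [IsFiniteMeasureOnCompacts (volume : Measure G)]

lemma sub_subset_sub_of_cov_eq [(volume : Measure G).IsOpenPosMeasure] (hA : IsCompact A)
    (hreg : A = closure (interior A)) (hK : IsCompact K) (hcov : cov A = cov K) :
    A - A ⊆ K - K := by
  have hint : ∀ a ∈ interior A, ∀ b ∈ interior A, a - b ∈ K - K := by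
    intro a ha b hb
    have hopen : IsOpen (interior A ∩ (· + (a - b)) ⁻¹' interior A) :=
      isOpen_interior.inter (isOpen_interior.preimage (continuous_add_const _))
    have hpos : 0 < cov A (a - b) := by
      refine ENNReal.toReal_pos (((hopen.measure_pos volume ⟨b, hb, ?_⟩).trans_le
        (measure_mono ?_)).ne') (measure_ne_top_of_subset inter_subset_left hA.measure_ne_top)
      · simpa using ha
      · exact inter_subset_inter interior_subset (preimage_mono interior_subset)
    rw [hcov] at hpos
    obtain ⟨y, hy, hy'⟩ := nonempty_of_measureReal_ne_zero hpos.ne'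
    exact ⟨_, hy', y, hy, add_sub_cancel_left y (a - b)⟩
  rintro _ ⟨a, ha, b, hb, rfl⟩
  rw [hreg] at ha hb
  exact (isCompact_sub_self hK).isClosed.closure_eq ▸ map_mem_closure₂ continuous_sub ha hb hint

variable [BorelSpace G] [(volume : Measure G).IsAddRightInvariant]

lemma integrable_indicator_mul (hA : IsCompact A) (u v : G) :
    Integrable fun y => A.indicator (1 : G → ℝ) (y + u) * A.indicator (1 : G → ℝ) (y + v) := by
  have hm := hA.measurableSet.preimage (continuous_add_const u).measurable
  have hm' := hA.measurableSet.preimage (continuous_add_const v).measurable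
  have hfin : volume ((· + u) ⁻¹' A) ≠ ⊤ := by
    rw [measure_preimage_add_right]
    exact hA.measure_ne_top
  have h := (integrable_indicator_iff (f := (1 : G → ℝ)) (hm.inter hm')).2
    (integrableOn_const (measure_ne_top_of_subset inter_subset_left hfin))
  rwa [inter_indicator_one] at h

lemma measurable_jumpProduct {G : Type*} [AddCommGroup G] [MeasurableSpace G] [MeasurableAdd G]
    {A : Set G} (hA : MeasurableSet A) (u v : G) : Measurable (jumpProduct A u v) := by
  have hA1 : Measurable (A.indicator (1 : G → ℝ)) := measurable_one.indicator hA
  have hjump : Measurable (jump A u) := hA1.sub (hA1.comp (measurable_add_const u))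
  exact hjump.mul (hjump.comp (measurable_add_const v))

lemma integrable_jumpProduct (hA : IsCompact A) (u v : G) : Integrable (jumpProduct A u v) := by
  rw [funext (jumpProduct_expand A u v)]
  have hint := integrable_indicator_mul hA
  exact ((hint _ _).sub (hint _ _)).sub ((hint _ _).sub (hint _ _))

lemma integral_jumpProduct (hA : IsCompact A) (u v : G) :
    ∫ y, jumpProduct A u v y = 2 * cov A v - cov A (v + u) - cov A (v - u) := by
  have hint := integrable_indicator_mul hA
  simp_rw [jumpProduct_expand]
  have hsub (a b c d : G) : Integrable fun y =>
      A.indicator (1 : G → ℝ) (y + a) * A.indicator (1 : G → ℝ) (y + b) -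
        A.indicator (1 : G → ℝ) (y + c) * A.indicator (1 : G → ℝ) (y + d) :=
    (hint a b).sub (hint c d)
  rw [integral_sub (hsub _ _ _ _) (hsub _ _ _ _),
    integral_sub (hint _ _) (hint _ _), integral_sub (hint _ _) (hint _ _)]
  simp only [integral_indicator_mul hA.measurableSet, sub_zero, add_sub_cancel_right]
  ring

lemma integral_jumpProduct_le (hA : IsCompact A) (u v : G) :
    ∫ x, jumpProduct A u v x ≤ volume.real (exitSet A u v) + volume.real (exitSet A (-u) v) := by
  have hm (u : G) := measurableSet_exitSet hA.measurableSet u v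
  have hint (u : G) : Integrable ((exitSet A u v).indicator (1 : G → ℝ)) :=
    (integrable_indicator_iff (hm u)).2
      (integrableOn_const (measure_ne_top_of_subset (fun _ hx => hx.1) hA.measure_ne_top))
  have hint' := (hint (-u)).comp_add_right u
  calc ∫ x, jumpProduct A u v x
      ≤ ∫ x, ((exitSet A u v).indicator 1 x + (exitSet A (-u) v).indicator 1 (x + u)) :=
        integral_mono (integrable_jumpProduct hA u v) ((hint u).add hint')
          (jumpProduct_le_indicator_exitSet A u v)
    _ = _ := by
        rw [integral_add (hint u) hint',
          integral_add_right_eq_self ((exitSet A (-u) v).indicator 1) u,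
          integral_indicator_one (hm u), integral_indicator_one (hm _)]

end Covariogram

section Autocorrelation

/-- The autocorrelation `t ↦ ∫ f(s) f(s + t) ds` of a function on the line. -/
noncomputable def autocorr (f : ℝ → ℝ) (t : ℝ) : ℝ := ∫ s, f s * f (s + t)

/-- The function `f` is Lipschitz with constant `C` up to jumps of size at most `Λ x` at the
points `x` of the finite set `T`. -/
def LipschitzUpToJumps (C : ℝ) (T : Finset ℝ) (Λ f : ℝ → ℝ) : Prop :=
  ∀ s t, 0 ≤ t → |f s - f (s + t)| ≤ C * t + ∑ x ∈ T, (Icc s (s + t)).indicator Λ x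

variable {f : ℝ → ℝ} {α β : ℝ}

lemma memLp_comp_add_right (hf : MemLp f 2) (t : ℝ) : MemLp (fun s => f (s + t)) 2 :=
  hf.comp_measurePreserving (measurePreserving_add_right volume t)

lemma integrable_sq_sub (hf : MemLp f 2) (t : ℝ) : Integrable fun s => (f s - f (s + t)) ^ 2 :=
  (hf.sub (memLp_comp_add_right hf t)).integrable_sq

lemma integral_sq_sub (hf : MemLp f 2) (t : ℝ) :
    ∫ s, (f s - f (s + t)) ^ 2 = 2 * (autocorr f 0 - autocorr f t) := by
  have hft := memLp_comp_add_right hf t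
  have hsum : Integrable fun s => f s ^ 2 + f (s + t) ^ 2 :=
    hf.integrable_sq.add hft.integrable_sq
  have hprod : Integrable fun s => 2 * (f s * f (s + t)) := (hf.integrable_mul hft).const_mul 2
  have hshift : ∫ s, f (s + t) ^ 2 = ∫ s, f s ^ 2 :=
    integral_add_right_eq_self (fun s => f s ^ 2) t
  calc ∫ s, (f s - f (s + t)) ^ 2 = ∫ s, (f s ^ 2 + f (s + t) ^ 2 - 2 * (f s * f (s + t))) := by
        congr 1 with s
        ring
    _ = (∫ s, f s ^ 2) + (∫ s, f (s + t) ^ 2) - 2 * autocorr f t := by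
        rw [integral_sub hsum hprod, integral_add hf.integrable_sq hft.integrable_sq,
          integral_const_mul, autocorr]
    _ = 2 * (autocorr f 0 - autocorr f t) := by
        simp only [hshift, autocorr, add_zero, ← sq]
        ring

lemma integrable_indicator_Icc_const (a b c : ℝ) :
    Integrable ((Icc a b).indicator fun _ => c) :=
  (integrable_indicator_iff measurableSet_Icc).2 (integrableOn_const measure_Icc_lt_top.ne)

lemma integral_indicator_Icc_const {a b : ℝ} (hab : a ≤ b) (c : ℝ) :
    ∫ s, (Icc a b).indicator (fun _ => c) s = (b - a) * c := by
  rw [integral_indicator_const _ measurableSet_Icc, Real.volume_real_Icc_of_le hab, smul_eq_mul]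

namespace LipschitzUpToJumps

variable {C : ℝ} {T : Finset ℝ} {Λ : ℝ → ℝ}

lemma eventually_abs_sub_le (hf : LipschitzUpToJumps C T Λ f) (hΛ : 0 ≤ Λ) (x : ℝ) :
    ∀ᶠ t in 𝓝[>] (0 : ℝ), ∀ s, x ∈ Icc s (s + t) → |f s - f (s + t)| ≤ C * t + Λ x := by
  have hsep : ∀ᶠ t in 𝓝[>] (0 : ℝ), ∀ y ∈ T.erase x, t < |y - x| :=
    (eventually_all_finset _).2 fun y hy => nhdsWithin_le_nhds
      (gt_mem_nhds (abs_pos.2 (sub_ne_zero.2 (Finset.ne_of_mem_erase hy))))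
  filter_upwards [hsep, self_mem_nhdsWithin] with t hsep ht s hx
  refine (hf s t ht.le).trans (add_le_add_right ?_ _)
  calc ∑ y ∈ T, (Icc s (s + t)).indicator Λ y
      ≤ ∑ y ∈ insert x T, (Icc s (s + t)).indicator Λ y :=
        Finset.sum_le_sum_of_subset_of_nonneg (Finset.subset_insert _ _)
          fun y _ _ => indicator_nonneg (fun y _ => hΛ y) y
    _ = Λ x := by
        rw [Finset.sum_eq_single_of_mem x (Finset.mem_insert_self _ _), indicator_of_mem hx]
        refine fun y hy hne => indicator_of_notMem (fun hyI => ?_) _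
        have := hsep y (Finset.mem_erase.2 ⟨hne, (Finset.mem_insert.1 hy).resolve_left hne⟩)
        exact this.not_ge (abs_sub_le_iff.2 ⟨by linarith [hyI.2, hx.1], by linarith [hyI.1, hx.2]⟩)

lemma eventually_sq_sub_le (hf : LipschitzUpToJumps C T Λ f) (hΛ : 0 ≤ Λ)
    (h0 : ∀ s ∉ Icc α β, f s = 0) :
    ∀ᶠ t in 𝓝[>] (0 : ℝ), ∀ s, (f s - f (s + t)) ^ 2 ≤
      (Icc (α - 1) β).indicator (fun _ => C ^ 2 * t ^ 2) s
        + ∑ x ∈ T, (Icc (x - t) x).indicator (fun _ => (C * t + Λ x) ^ 2) s := by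
  filter_upwards [(eventually_all_finset T).2 fun x _ => hf.eventually_abs_sub_le hΛ x,
    Ioo_mem_nhdsGT one_pos] with t hT ht s
  have hjump0 : ∀ x ∈ T, 0 ≤ (Icc (x - t) x).indicator (fun _ => (C * t + Λ x) ^ 2) s :=
    fun x _ => indicator_nonneg (fun _ _ => sq_nonneg _) s
  have hdrift0 : 0 ≤ (Icc (α - 1) β).indicator (fun _ => C ^ 2 * t ^ 2) s :=
    indicator_nonneg (fun _ _ => by positivity) s
  by_cases hex : ∃ x ∈ T, x ∈ Icc s (s + t)
  · obtain ⟨x, hxT, hx⟩ := hex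
    have hterm := Finset.single_le_sum hjump0 hxT
    rw [indicator_of_mem (show s ∈ Icc (x - t) x from ⟨by linarith [hx.2], hx.1⟩)] at hterm
    have hsq := pow_le_pow_left₀ (abs_nonneg _) (hT x hxT s hx) 2
    rw [sq_abs] at hsq
    linarith
  · refine le_add_of_le_of_nonneg ?_ (Finset.sum_nonneg hjump0)
    by_cases hs : s ∈ Icc (α - 1) β
    · have hlip := hf s t ht.1.le
      rw [Finset.sum_eq_zero fun x hx => indicator_of_notMem (fun h => hex ⟨x, hx, h⟩) _,
        add_zero] at hlip
      rw [indicator_of_mem hs, ← mul_pow]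
      exact sq_le_sq' (abs_le.1 hlip).1 (abs_le.1 hlip).2
    · rw [h0 s fun h => hs ⟨by linarith [h.1], h.2⟩,
        h0 (s + t) fun h => hs ⟨by linarith [h.1, ht.2], by linarith [h.2, ht.1]⟩]
      simpa using hdrift0

lemma eventually_integral_sq_sub_le (hf : LipschitzUpToJumps C T Λ f) (hΛ : 0 ≤ Λ)
    (hαβ : α ≤ β) (h0 : ∀ s ∉ Icc α β, f s = 0) :
    ∀ᶠ t in 𝓝[>] (0 : ℝ), ∫ s, (f s - f (s + t)) ^ 2 ≤
      t * ((β - α + 1) * C ^ 2 * t + ∑ x ∈ T, (C * t + Λ x) ^ 2) := by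
  filter_upwards [hf.eventually_sq_sub_le hΛ h0, self_mem_nhdsWithin] with t hpt (ht : 0 < t)
  have hint := integrable_indicator_Icc_const
  calc ∫ s, (f s - f (s + t)) ^ 2 ≤ ∫ s, ((Icc (α - 1) β).indicator (fun _ => C ^ 2 * t ^ 2) s
        + ∑ x ∈ T, (Icc (x - t) x).indicator (fun _ => (C * t + Λ x) ^ 2) s) :=
        integral_mono_of_nonneg (.of_forall fun s => sq_nonneg _)
          ((hint _ _ _).add (integrable_finsetSum T fun _ _ => hint _ _ _)) (.of_forall hpt)
    _ = t * ((β - α + 1) * C ^ 2 * t + ∑ x ∈ T, (C * t + Λ x) ^ 2) := by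
        rw [integral_add (hint _ _ _) (integrable_finsetSum T fun _ _ => hint _ _ _),
          integral_finsetSum T fun _ _ => hint _ _ _, integral_indicator_Icc_const (by linarith),
          Finset.sum_congr rfl fun x _ => integral_indicator_Icc_const (by linarith) _,
          mul_add, Finset.mul_sum]
        simp only [sub_sub_cancel]
        ring

lemma eventually_autocorr_le (hf : LipschitzUpToJumps C T Λ f) (hΛ : 0 ≤ Λ) (hf0 : 0 ≤ f)
    (h0 : ∀ s ∉ Icc α β, f s = 0) :
    ∀ᶠ t in 𝓝[>] (0 : ℝ), autocorr f (β - α - t) ≤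
      t * ((C * (2 * t) + Λ α) * (C * (2 * t) + Λ β)) := by
  have hdouble : Tendsto (fun t : ℝ => 2 * t) (𝓝[>] 0) (𝓝[>] 0) :=
    tendsto_nhdsWithin_of_tendsto_nhds_of_eventually_within _
      (((continuous_const_mul 2).tendsto' _ _ (mul_zero _)).mono_left nhdsWithin_le_nhds)
      (eventually_mem_nhdsWithin.mono fun t ht => mul_pos two_pos (mem_Ioi.1 ht))
  filter_upwards [hdouble.eventually (hf.eventually_abs_sub_le hΛ α),
    hdouble.eventually (hf.eventually_abs_sub_le hΛ β), self_mem_nhdsWithin] with t hα hβ ht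
  rw [mem_Ioi] at ht
  have hbot : ∀ s ∈ Icc α (α + t), f s ≤ C * (2 * t) + Λ α := fun s hs => by
    have h := hα (s - 2 * t) ⟨by linarith [hs.2], by linarith [hs.1]⟩
    rw [sub_add_cancel, h0 (s - 2 * t) fun h => by linarith [h.1, hs.2], zero_sub, abs_neg] at h
    exact (le_abs_self _).trans h
  have htop : ∀ s ∈ Icc (β - t) β, f s ≤ C * (2 * t) + Λ β := fun s hs => by
    have h := hβ s ⟨hs.2, by linarith [hs.1]⟩
    rw [h0 (s + 2 * t) fun h => by linarith [h.2, hs.1], sub_zero] at h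
    exact (le_abs_self _).trans h
  have hpt : ∀ s, f s * f (s + (β - α - t)) ≤ (Icc α (α + t)).indicator
      (fun _ => (C * (2 * t) + Λ α) * (C * (2 * t) + Λ β)) s := by
    intro s
    by_cases hs : s ∈ Icc α (α + t)
    · rw [indicator_of_mem hs]
      exact mul_le_mul (hbot s hs) (htop _ ⟨by linarith [hs.1], by linarith [hs.2]⟩) (hf0 _)
        ((hf0 s).trans (hbot s hs))
    · rw [indicator_of_notMem hs]
      refine (mul_eq_zero.2 ?_).le
      by_cases hsα : α ≤ s
      · exact Or.inr (h0 _ fun h => hs ⟨hsα, by linarith [h.2]⟩)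
      · exact Or.inl (h0 _ fun h => hsα h.1)
  calc autocorr f (β - α - t) ≤ ∫ s, (Icc α (α + t)).indicator
        (fun _ => (C * (2 * t) + Λ α) * (C * (2 * t) + Λ β)) s :=
        integral_mono_of_nonneg (.of_forall fun s => mul_nonneg (hf0 _) (hf0 _))
          (integrable_indicator_Icc_const _ _ _) (.of_forall hpt)
    _ = _ := by
        rw [integral_indicator_Icc_const (by linarith), add_sub_cancel_left]

end LipschitzUpToJumps

section Concave

variable {t : ℝ}

lemma one_sub_div_mul_le_left (hf : ConcaveOn ℝ (Icc α β) f) (hf0 : 0 ≤ f) (ht : t < β - α) {s : ℝ}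
    (hs : s ∈ Icc α (α + t)) : (1 - t / (β - α)) * f α ≤ f s := by
  have hw : 0 < β - α := by linarith [hs.1, hs.2]
  have h := hf.2 (left_mem_Icc.2 (by linarith)) (right_mem_Icc.2 (by linarith))
    (div_nonneg (by linarith [hs.2] : 0 ≤ β - s) hw.le)
    (div_nonneg (sub_nonneg.2 hs.1) hw.le) (by field_simp; ring)
  have hcomb : ((β - s) / (β - α)) • α + ((s - α) / (β - α)) • β = s := by
    simp only [smul_eq_mul]
    field_simp
    ring
  rw [hcomb, smul_eq_mul, smul_eq_mul] at h
  have hcoef : 1 - t / (β - α) ≤ (β - s) / (β - α) := by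
    rw [one_sub_div hw.ne']
    exact div_le_div_of_nonneg_right (by linarith [hs.2]) hw.le
  have hβ := mul_nonneg (div_nonneg (sub_nonneg.2 hs.1) hw.le) (hf0 β)
  linarith [mul_le_mul_of_nonneg_right hcoef (hf0 α)]

lemma one_sub_div_mul_le_right (hf : ConcaveOn ℝ (Icc α β) f) (hf0 : 0 ≤ f) (ht : t < β - α)
    {s : ℝ} (hs : s ∈ Icc (β - t) β) : (1 - t / (β - α)) * f β ≤ f s := by
  have hneg : ConcaveOn ℝ (Icc (-β) (-α)) fun x => f (-x) := by
    rw [← Set.neg_Icc]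
    exact hf.comp_linearMap (-LinearMap.id)
  have h := one_sub_div_mul_le_left (s := -s) (t := t) hneg (fun x => hf0 (-x)) (by linarith)
    ⟨by linarith [hs.2], by linarith [hs.1]⟩
  simpa [neg_add_eq_sub] using h

lemma le_integral_sq_sub (hf : ConcaveOn ℝ (Icc α β) f) (hf0 : 0 ≤ f)
    (h0 : ∀ s ∉ Icc α β, f s = 0) (hL2 : MemLp f 2) (ht : t ∈ Ioo 0 (β - α)) :
    t * ((1 - t / (β - α)) ^ 2 * (f α ^ 2 + f β ^ 2)) ≤ ∫ s, (f s - f (s + t)) ^ 2 := by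
  set μ : ℝ := 1 - t / (β - α)
  have hμ0 : 0 ≤ μ := sub_nonneg.2 ((div_le_one (ht.1.trans ht.2)).2 ht.2.le)
  have hpt : ∀ s, (Ico (α - t) α).indicator (fun _ => (μ * f α) ^ 2) s
      + (Ioc (β - t) β).indicator (fun _ => (μ * f β) ^ 2) s ≤ (f s - f (s + t)) ^ 2 := by
    intro s
    by_cases h1 : s ∈ Ico (α - t) α
    · rw [indicator_of_mem h1, indicator_of_notMem fun h2 => by linarith [h1.2, h2.1, ht.2],
        add_zero, h0 s fun h => by linarith [h.1, h1.2], zero_sub, neg_sq]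
      exact pow_le_pow_left₀ (mul_nonneg hμ0 (hf0 _))
        (one_sub_div_mul_le_left hf hf0 ht.2 ⟨by linarith [h1.1], by linarith [h1.2]⟩) 2
    rw [indicator_of_notMem h1, zero_add]
    by_cases h2 : s ∈ Ioc (β - t) β
    · rw [indicator_of_mem h2, h0 (s + t) fun h => by linarith [h.2, h2.1], sub_zero]
      exact pow_le_pow_left₀ (mul_nonneg hμ0 (hf0 _))
        (one_sub_div_mul_le_right hf hf0 ht.2 (Ioc_subset_Icc_self h2)) 2
    · rw [indicator_of_notMem h2]
      exact sq_nonneg _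
  have hα : Integrable ((Ico (α - t) α).indicator fun _ => (μ * f α) ^ 2) :=
    (integrable_indicator_iff measurableSet_Ico).2 (integrableOn_const measure_Ico_lt_top.ne)
  have hβ : Integrable ((Ioc (β - t) β).indicator fun _ => (μ * f β) ^ 2) :=
    (integrable_indicator_iff measurableSet_Ioc).2 (integrableOn_const measure_Ioc_lt_top.ne)
  refine le_trans (le_of_eq ?_) (integral_mono (hα.add hβ) (integrable_sq_sub hL2 t) hpt)
  rw [integral_add' hα hβ, integral_indicator_const _ measurableSet_Ico,
    integral_indicator_const _ measurableSet_Ioc, Real.volume_real_Ico_of_le (by linarith [ht.1]),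
    Real.volume_real_Ioc_of_le (by linarith [ht.1]), smul_eq_mul, smul_eq_mul]
  ring

lemma le_autocorr (hf : ConcaveOn ℝ (Icc α β) f) (hf0 : 0 ≤ f) (hL2 : MemLp f 2)
    (ht : t ∈ Ioo 0 (β - α)) :
    t * ((1 - t / (β - α)) ^ 2 * (f α * f β)) ≤ autocorr f (β - α - t) := by
  set μ : ℝ := 1 - t / (β - α)
  have hμ0 : 0 ≤ μ := sub_nonneg.2 ((div_le_one (ht.1.trans ht.2)).2 ht.2.le)
  have hpt : ∀ s, (Icc α (α + t)).indicator (fun _ => (μ * f α) * (μ * f β)) s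
      ≤ f s * f (s + (β - α - t)) := by
    refine indicator_le' (fun s hs => ?_) fun s _ => mul_nonneg (hf0 _) (hf0 _)
    exact mul_le_mul (one_sub_div_mul_le_left hf hf0 ht.2 hs)
      (one_sub_div_mul_le_right hf hf0 ht.2 ⟨by linarith [hs.1], by linarith [hs.2]⟩)
      (mul_nonneg hμ0 (hf0 _)) (hf0 _)
  refine le_trans (le_of_eq ?_) (integral_mono (integrable_indicator_Icc_const _ _ _)
    (hL2.integrable_mul (memLp_comp_add_right hL2 _)) hpt)
  rw [integral_indicator_Icc_const (by linarith [ht.1])]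
  ring

end Concave

-- The expansions of the common autocorrelation at `0` and at `β - α` give
-- `F α' ^ 2 + F β' ^ 2 ≤ ∑ Λ ^ 2` and `F α' * F β' ≤ Λ α * Λ β`, respectively.
lemma sq_add_le_of_autocorr_eq {F Λ : ℝ → ℝ} {C α' β' : ℝ} {T : Finset ℝ}
    (hf : LipschitzUpToJumps C T Λ f) (hΛ : 0 ≤ Λ) (hf0 : 0 ≤ f) (hfL : MemLp f 2)
    (hfs : ∀ s ∉ Icc α β, f s = 0) (hF : ConcaveOn ℝ (Icc α' β') F) (hF0 : 0 ≤ F)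
    (hFL : MemLp F 2) (hFs : ∀ s ∉ Icc α' β', F s = 0) (hw : β - α = β' - α') (hw0 : α' < β')
    (heq : autocorr f = autocorr F) :
    (F α' + F β') ^ 2 ≤ ∑ x ∈ T, Λ x ^ 2 + 2 * (Λ α * Λ β) := by
  set lower : ℝ → ℝ := fun t => (1 - t / (β' - α')) ^ 2 * (F α' + F β') ^ 2
  set upper : ℝ → ℝ := fun t => (β - α + 1) * C ^ 2 * t + ∑ x ∈ T, (C * t + Λ x) ^ 2 +
    2 * ((C * (2 * t) + Λ α) * (C * (2 * t) + Λ β))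
  have hle : ∀ᶠ t in 𝓝[>] (0 : ℝ), lower t ≤ upper t := by
    filter_upwards [hf.eventually_integral_sq_sub_le hΛ (by linarith) hfs,
      hf.eventually_autocorr_le hΛ hf0 hfs, Ioo_mem_nhdsGT (sub_pos.2 hw0)] with t h1 h2 ht
    have h3 := le_integral_sq_sub hF hF0 hFs hFL ht
    have h4 := le_autocorr hF hF0 hFL ht
    rw [integral_sq_sub hfL] at h1
    rw [hw] at h2
    rw [integral_sq_sub hFL, ← heq] at h3
    rw [← heq] at h4
    refine le_of_mul_le_mul_left ?_ ht.1
    simp only [lower, upper, hw]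
    rw [hw] at h1
    linarith
  have hlim : ∀ g : ℝ → ℝ, Continuous g → Tendsto g (𝓝[>] 0) (𝓝 (g 0)) := fun g hg =>
    (hg.tendsto 0).mono_left nhdsWithin_le_nhds
  simpa [lower, upper] using le_of_tendsto_of_tendsto (hlim lower (by fun_prop))
    (hlim upper (by fun_prop)) hle

end Autocorrelation

section Slices

/-- The horizontal slice of a planar set at height `s`. -/
def slice (A : Set (ℝ × ℝ)) (s : ℝ) : Set ℝ := (·, s) ⁻¹' A

/-- The length of the horizontal slice of a planar set at height `s`. -/
noncomputable def len (A : Set (ℝ × ℝ)) (s : ℝ) : ℝ := volume.real (slice A s)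

variable {A K : Set (ℝ × ℝ)}

lemma isCompact_slice (hA : IsCompact A) (s : ℝ) : IsCompact (slice A s) :=
  (hA.image continuous_fst).of_isClosed_subset
    (hA.isClosed.preimage (by fun_prop)) fun r hr => ⟨(r, s), hr, rfl⟩

lemma len_nonneg (s : ℝ) : 0 ≤ len A s := measureReal_nonneg

lemma integral_indicator_slice (hA : IsCompact A) (s : ℝ) :
    ∫ r, A.indicator (1 : ℝ × ℝ → ℝ) (r, s) = len A s := by
  rw [len, ← integral_indicator_one (isCompact_slice hA s).measurableSet]
  rfl

lemma integrable_indicator_one (hA : IsCompact A) : Integrable (A.indicator (1 : ℝ × ℝ → ℝ)) :=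
  (integrable_indicator_iff hA.measurableSet).2 (integrableOn_const hA.measure_ne_top)

lemma integrable_len (hA : IsCompact A) : Integrable (len A) :=
  (integrable_indicator_one hA).integral_prod_right.congr
    (.of_forall fun s => integral_indicator_slice hA s)

lemma measurable_len (hA : IsCompact A) : Measurable (len A) :=
  (measurable_measure_prodMk_right hA.measurableSet).ennreal_toReal

lemma len_eq_zero {s : ℝ} (h : s ∉ Prod.snd '' A) : len A s = 0 := by
  have : slice A s = ∅ := eq_empty_of_forall_notMem fun r hr => h ⟨(r, s), hr, rfl⟩
  simp [len, this]

lemma exists_forall_len_le (hA : IsCompact A) : ∃ C, ∀ s, len A s ≤ C :=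
  ⟨volume.real (Prod.fst '' A), fun s => measureReal_mono (fun r hr => ⟨(r, s), hr, rfl⟩)
    (hA.image continuous_fst).measure_ne_top⟩

lemma integral_cov_fst (hA : IsCompact A) (t : ℝ) :
    ∫ r, cov A (r, t) = autocorr (len A) t := by
  set F : ℝ → ℝ × ℝ → ℝ := fun r y => A.indicator 1 y * A.indicator 1 (y + (r, t))
  have hF : Integrable (Function.uncurry F) (volume.prod volume) := by
    have hS : IsCompact {z : ℝ × ℝ × ℝ | z.2 ∈ A ∧ z.2 + (z.1, t) ∈ A} := by
      refine ((isCompact_sub_self hA).image continuous_fst |>.prod hA).of_isClosed_subset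
        ((hA.isClosed.preimage (by fun_prop)).inter (hA.isClosed.preimage (by fun_prop)))
        fun z hz => ⟨⟨_, sub_mem_sub hz.2 hz.1, by simp⟩, hz.1⟩
    refine ((integrable_indicator_iff (f := 1) hS.measurableSet).2
      (integrableOn_const hS.measure_ne_top)).congr (.of_forall fun z => ?_)
    exact congrFun inter_indicator_one z
  have hslice : ∀ y : ℝ × ℝ, ∫ r, F r y = A.indicator 1 y * len A (y.2 + t) := fun y => by
    rw [integral_const_mul, ← integral_indicator_slice hA,
      ← integral_add_left_eq_self (fun r => A.indicator _ (r, y.2 + t)) y.1]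
    rfl
  calc ∫ r, cov A (r, t) = ∫ r, ∫ y, F r y := by
        congr 1 with r
        rw [← sub_zero (r, t), ← integral_indicator_mul hA.measurableSet]
        simp only [F, add_zero]
    _ = ∫ y : ℝ × ℝ, A.indicator 1 y * len A (y.2 + t) := by
        simp_rw [integral_integral_swap hF, hslice]
    _ = ∫ s, ∫ r, A.indicator 1 (r, s) * len A (s + t) :=
        integral_prod_symm _ (hF.integral_prod_right.congr (.of_forall hslice))
    _ = autocorr (len A) t := by
        simp_rw [integral_mul_const, integral_indicator_slice hA, autocorr]

lemma memLp_len (hA : IsCompact A) : MemLp (len A) 2 := by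
  obtain ⟨C, hC⟩ := exists_forall_len_le hA
  refine (memLp_two_iff_integrable_sq (measurable_len hA).aestronglyMeasurable).2 ?_
  simp_rw [sq]
  exact (integrable_len hA).bdd_mul (measurable_len hA).aestronglyMeasurable
    (.of_forall fun s => (Real.norm_of_nonneg (len_nonneg s)).trans_le (hC s))

lemma slice_sub_eq {a b : ℝ} (ha : IsLeast (Prod.snd '' A) a) (hb : IsGreatest (Prod.snd '' A) b) :
    slice (A - A) (b - a) = slice A b - slice A a := by
  ext r
  constructor
  · rintro ⟨x, hx, y, hy, hxy⟩
    have hxb := hb.2 (mem_image_of_mem _ hx)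
    have hya := ha.2 (mem_image_of_mem _ hy)
    have h2 : x.2 - y.2 = b - a := congrArg Prod.snd hxy
    refine ⟨x.1, ?_, y.1, ?_, congrArg Prod.fst hxy⟩
    · rwa [slice, mem_preimage, show b = x.2 by linarith]
    · rwa [slice, mem_preimage, show a = y.2 by linarith]
  · rintro ⟨x, hx, y, hy, rfl⟩
    exact ⟨_, hx, _, hy, rfl⟩

lemma convex_slice (hK : Convex ℝ K) (s : ℝ) : Convex ℝ (slice K s) := by
  rw [convex_iff_forall_pos]
  intro x hx y hy a b ha hb hab
  have h := hK hx hy ha.le hb.le hab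
  rwa [Prod.smul_mk, Prod.smul_mk, Prod.mk_add_mk, ← add_smul, hab, one_smul] at h

lemma slice_eq_Icc (hKc : IsCompact K) (hK : Convex ℝ K) {s : ℝ} (hs : s ∈ Prod.snd '' K) :
    ∃ x y, x ≤ y ∧ slice K s = Icc x y := by
  obtain ⟨⟨c, _⟩, hc, rfl⟩ := hs
  have h := eq_Icc_of_connected_compact ⟨⟨c, hc⟩, (convex_slice hK _).isPreconnected⟩
    (isCompact_slice hKc _)
  exact ⟨_, _, nonempty_Icc.1 (h ▸ ⟨c, hc⟩), h⟩

lemma concaveOn_len (hK : Convex ℝ K) (hKc : IsCompact K) :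
    ConcaveOn ℝ (Prod.snd '' K) (len K) := by
  refine ⟨hK.linear_image (LinearMap.snd ℝ ℝ ℝ), fun s hs s' hs' a b ha hb hab => ?_⟩
  obtain ⟨x, y, hxy, h⟩ := slice_eq_Icc hKc hK hs
  obtain ⟨x', y', hxy', h'⟩ := slice_eq_Icc hKc hK hs'
  have hcomb : ∀ u ∈ slice K s, ∀ v ∈ slice K s', a • u + b • v ∈ slice K (a • s + b • s') :=
    fun u hu v hv => hK hu hv ha hb hab
  have hx := hcomb x (h ▸ left_mem_Icc.2 hxy) x' (h' ▸ left_mem_Icc.2 hxy')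
  have hy := hcomb y (h ▸ right_mem_Icc.2 hxy) y' (h' ▸ right_mem_Icc.2 hxy')
  have hle : a • x + b • x' ≤ a • y + b • y' :=
    add_le_add (mul_le_mul_of_nonneg_left hxy ha) (mul_le_mul_of_nonneg_left hxy' hb)
  have hmono := measureReal_mono ((convex_slice hK (a • s + b • s')).ordConnected.out hx hy)
    (isCompact_slice hKc _).measure_ne_top (μ := volume)
  calc a • len K s + b • len K s' = a • y + b • y' - (a • x + b • x') := by
        rw [len, len, h, h', Real.volume_real_Icc_of_le hxy, Real.volume_real_Icc_of_le hxy']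
        simp only [smul_eq_mul]
        ring
    _ ≤ len K (a • s + b • s') := by rwa [Real.volume_real_Icc_of_le hle] at hmono

end Slices

section Polygon

/-- The linear functional `u ↦ det (d, u)`, whose kernel is spanned by `d` when `d ≠ 0`. -/
noncomputable def detForm (d : ℝ × ℝ) : ℝ × ℝ →L[ℝ] ℝ :=
  d.1 • ContinuousLinearMap.snd ℝ ℝ ℝ - d.2 • ContinuousLinearMap.fst ℝ ℝ ℝ

lemma detForm_apply (d u : ℝ × ℝ) : detForm d u = d.1 * u.2 - d.2 * u.1 := rfl

lemma detForm_ne_zero {d : ℝ × ℝ} (hd : d ≠ 0) : detForm d ≠ 0 := by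
  intro h
  have h1 := DFunLike.congr_fun h (1, 0)
  have h2 := DFunLike.congr_fun h (0, 1)
  simp only [detForm_apply, zero_apply, mul_zero, mul_one, zero_sub, sub_zero, neg_eq_zero]
    at h1 h2
  exact hd (Prod.ext h2 h1)

lemma exists_sub_eq_smul_of_mem_segment {E : Type*} [AddCommGroup E] [Module ℝ E] {p q x y : E}
    (hx : x ∈ segment ℝ p q) (hy : y ∈ segment ℝ p q) : ∃ c : ℝ, x - y = c • (q - p) := by
  rw [segment_eq_image'] at hx hy
  obtain ⟨θ, -, rfl⟩ := hx
  obtain ⟨φ, -, rfl⟩ := hy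
  exact ⟨θ - φ, by module⟩

lemma eq_of_detForm_sub_eq_zero {d e x y : ℝ × ℝ} (hde : detForm d e ≠ 0)
    (hd : detForm d (x - y) = 0) (he : detForm e (x - y) = 0) : x = y := by
  simp only [detForm_apply, Prod.fst_sub, Prod.snd_sub] at hde hd he
  have h1 : (x.1 - y.1) * (d.1 * e.2 - d.2 * e.1) = 0 := by linear_combination e.1 * hd - d.1 * he
  have h2 : (x.2 - y.2) * (d.1 * e.2 - d.2 * e.1) = 0 := by linear_combination e.2 * hd - d.2 * he
  exact Prod.ext (sub_eq_zero.1 ((mul_eq_zero.1 h1).resolve_right hde))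
    (sub_eq_zero.1 ((mul_eq_zero.1 h2).resolve_right hde))

lemma eventually_forall_mem_vertices {E : Type*} [TopologicalSpace E] [AddMonoid E]
    [ContinuousAdd E] {P : E → Prop} {x : E} (hP : ∀ᶠ y in 𝓝 x, P y) :
    ∀ᶠ w : E × E × E in 𝓝 (0, 0, x),
      ∀ y ∈ ({w.2.2, w.2.2 + w.1, w.2.2 + w.2.1, w.2.2 + w.2.1 + w.1} : Set E), P y := by
  have hcomp (g : E × E × E → E) (hg : Continuous g) (h0 : g (0, 0, x) = x) :
      ∀ᶠ w in 𝓝 (0, 0, x), P (g w) := (hg.tendsto' _ _ h0).eventually hP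
  simp only [mem_insert_iff, mem_singleton_iff, forall_eq_or_imp, forall_eq]
  exact (hcomp _ (by fun_prop) rfl).and <| (hcomp _ (by fun_prop) (by simp)).and <|
    (hcomp _ (by fun_prop) (by simp)).and (hcomp _ (by fun_prop) (by simp))

lemma continuous_sides (ε a : ℝ) : Continuous fun z : ℝ × ℝ =>
    (((0 : ℝ), ε * z.1), (z.1, (0 : ℝ)), (a, z.2)) := by fun_prop

lemma eventually_forall_Ioo {P : ℝ → ℝ → Prop} {ε s₀ : ℝ}
    (h : ∀ᶠ z : ℝ × ℝ in 𝓝 (0, s₀), z.2 ∈ Ioo (s₀ - ε * z.1) s₀ → P z.1 z.2) :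
    ∀ᶠ r in 𝓝 (0 : ℝ), ∀ s ∈ Ioo (s₀ - ε * r) s₀, P r s := by
  rw [nhds_prod_eq] at h
  obtain ⟨P₁, h₁, P₂, h₂, hP⟩ := eventually_prod_iff.1 h
  have hlim : Tendsto (fun r => Ioo (s₀ - ε * r) s₀) (𝓝 0) (𝓝 s₀).smallSets :=
    (Continuous.tendsto' (f := fun r => s₀ - ε * r) (by fun_prop) _ _ (by simp)).Ioo
      tendsto_const_nhds
  filter_upwards [h₁, hlim.eventually (eventually_smallSets_forall.2 h₂)] with r hr₁ hr₂ s hs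
  exact hP hr₁ (hr₂ s hs) hs

variable {ι : Type*} {p q : ι → ℝ × ℝ} {A : Set (ℝ × ℝ)} {x : ℝ × ℝ}

/-- The points lying on two non-parallel segments of the family `[p i, q i]`. -/
def crossings (p q : ι → ℝ × ℝ) : Set (ℝ × ℝ) :=
  {x | ∃ i j, detForm (q i - p i) (q j - p j) ≠ 0 ∧
    x ∈ segment ℝ (p i) (q i) ∧ x ∈ segment ℝ (p j) (q j)}

/-- The union of the horizontal segments of the family `[p i, q i]`. -/
def horizontalEdges (p q : ι → ℝ × ℝ) : Set (ℝ × ℝ) :=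
  ⋃ i ∈ {i | (p i).2 = (q i).2}, segment ℝ (p i) (q i)

lemma isCompact_segment (p q : ℝ × ℝ) : IsCompact (segment ℝ p q) :=
  convexHull_pair (𝕜 := ℝ) p q ▸ (Set.toFinite {p, q}).isCompact_convexHull ℝ

variable [Finite ι]

lemma finite_crossings (p q : ι → ℝ × ℝ) : (crossings p q).Finite := by
  have h : crossings p q ⊆ ⋃ i, ⋃ j, {x | detForm (q i - p i) (q j - p j) ≠ 0 ∧
      x ∈ segment ℝ (p i) (q i) ∧ x ∈ segment ℝ (p j) (q j)} :=
    fun x ⟨i, j, hx⟩ => mem_iUnion₂.2 ⟨i, j, hx⟩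
  refine (finite_iUnion fun i => finite_iUnion fun j => Set.Subsingleton.finite ?_).subset h
  rintro x ⟨hd, hxi, hxj⟩ y ⟨-, hyi, hyj⟩
  have hpar (k : ι) (hx : x ∈ segment ℝ (p k) (q k)) (hy : y ∈ segment ℝ (p k) (q k)) :
      detForm (q k - p k) (x - y) = 0 := by
    obtain ⟨c, hc⟩ := exists_sub_eq_smul_of_mem_segment hx hy
    rw [hc, map_smul, detForm_apply, mul_comm, sub_self, smul_zero]
  exact eq_of_detForm_sub_eq_zero hd (hpar i hxi hyi) (hpar j hxj hyj)

lemma isCompact_horizontalEdges (p q : ι → ℝ × ℝ) : IsCompact (horizontalEdges p q) :=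
  (Set.toFinite _).isCompact_biUnion fun i _ => isCompact_segment (p i) (q i)

lemma eventually_detForm_eq (hx : x ∉ crossings p q) {i : ι} (hi : x ∈ segment ℝ (p i) (q i)) :
    ∀ᶠ y in 𝓝 x, y ∈ ⋃ j, segment ℝ (p j) (q j) →
      detForm (q i - p i) y = detForm (q i - p i) x := by
  simp only [mem_iUnion, forall_exists_index]
  refine eventually_all.2 fun j => ?_
  by_cases hj : x ∈ segment ℝ (p j) (q j)
  · refine .of_forall fun y hy => sub_eq_zero.1 ?_
    obtain ⟨c, hc⟩ := exists_sub_eq_smul_of_mem_segment hy hj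
    have hpar : detForm (q i - p i) (q j - p j) = 0 := by
      by_contra hne
      exact hx ⟨i, j, hne, hi, hj⟩
    rw [← map_sub, hc, map_smul, hpar, smul_zero]
  · filter_upwards [(isCompact_segment _ _).isClosed.isOpen_compl.mem_nhds hj] with y hy hy'
    exact absurd hy' hy

/-- A regular compact set whose boundary is the union of the nondegenerate segments `[p i, q i]`. -/
structure IsPolygonal {E : Type*} [AddCommGroup E] [Module ℝ E] [TopologicalSpace E] (A : Set E)
    (p q : ι → E) : Prop where
  isCompact : IsCompact A
  eq_closure_interior : A = closure (interior A)
  ne : ∀ i, p i ≠ q i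
  frontier_eq : frontier A = ⋃ i, segment ℝ (p i) (q i)

namespace IsPolygonal

lemma exists_eventually_mem_iff_le (hA : IsPolygonal A p q) (hx : x ∉ crossings p q) :
    ∃ (f : ℝ × ℝ →L[ℝ] ℝ) (c : ℝ), ∀ᶠ y in 𝓝 x, (y ∈ A ↔ f y ≤ c) := by
  by_cases hxA : x ∈ frontier A
  · obtain ⟨i, hi⟩ := mem_iUnion.1 (hA.frontier_eq ▸ hxA)
    have hfr := hA.frontier_eq ▸ eventually_detForm_eq hx hi
    rcases eventually_mem_iff_halfSpace hA.eq_closure_interior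
      (detForm_ne_zero (sub_ne_zero.2 (hA.ne i).symm)) hxA hfr with h | h
    · exact ⟨_, _, h⟩
    · exact ⟨-detForm (q i - p i), _, h.mono fun y hy => hy.trans neg_le_neg_iff.symm⟩
  by_cases hxi : x ∈ interior A
  · exact ⟨0, 0, mem_of_superset (isOpen_interior.mem_nhds hxi) fun y hy => by
      simp [interior_subset hy]⟩
  · have hxc : x ∈ Aᶜ := fun h => hxA ⟨subset_closure h, hxi⟩
    exact ⟨0, -1, mem_of_superset (hA.isCompact.isClosed.isOpen_compl.mem_nhds hxc) fun y hy =>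
      iff_of_false hy (by simp)⟩

lemma exists_eventually_mem_iff_le_of_mem_horizontalEdges (hA : IsPolygonal A p q)
    (hx : x ∉ crossings p q) (hxe : x ∈ horizontalEdges p q) :
    ∃ c : ℝ, c ≠ 0 ∧ ∀ᶠ y in 𝓝 x, (y ∈ A ↔ c * y.2 ≤ c * x.2) := by
  obtain ⟨i, hi, hxi⟩ := mem_iUnion₂.1 hxe
  have hd2 : (q i - p i).2 = 0 := sub_eq_zero.2 (Eq.symm hi)
  have hd1 : (q i - p i).1 ≠ 0 := fun h => sub_ne_zero.2 (hA.ne i).symm (Prod.ext h hd2)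
  have hsnd : ContinuousLinearMap.snd ℝ ℝ ℝ ≠ 0 := fun h => by
    simpa using DFunLike.congr_fun h (0, 1)
  have hfr : ∀ᶠ y in 𝓝 x, y ∈ frontier A → y.2 = x.2 := by
    filter_upwards [hA.frontier_eq ▸ eventually_detForm_eq hx hxi] with y hy hyA
    have h := hy hyA
    rw [detForm_apply, detForm_apply, hd2, zero_mul, zero_mul, sub_zero, sub_zero] at h
    exact mul_left_cancel₀ hd1 h
  rcases eventually_mem_iff_halfSpace (f := ContinuousLinearMap.snd ℝ ℝ ℝ) hA.eq_closure_interior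
    hsnd (hA.frontier_eq ▸ mem_iUnion_of_mem i hxi) hfr with h | h
  · exact ⟨1, one_ne_zero, by simpa using h⟩
  · exact ⟨-1, neg_ne_zero.2 one_ne_zero, by simpa using h⟩

lemma eventually_jumpProduct_nonneg (hA : IsPolygonal A p q) (hx : x ∉ crossings p q) :
    ∀ᶠ w : (ℝ × ℝ) × (ℝ × ℝ) × (ℝ × ℝ) in 𝓝 (0, 0, x), 0 ≤ jumpProduct A w.1 w.2.1 w.2.2 := by
  obtain ⟨f, c, hf⟩ := hA.exists_eventually_mem_iff_le hx
  exact (eventually_forall_mem_vertices hf).mono fun w hw =>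
    jumpProduct_nonneg_of_mem_iff_le (f := (f : ℝ × ℝ →+ ℝ)) hw

lemma eventually_forall_jumpProduct_nonneg (hA : IsPolygonal A p q) {a : ℝ}
    (ha : ∀ s, (a, s) ∉ crossings p q) (ε : ℝ) :
    ∀ᶠ r in 𝓝 (0 : ℝ), ∀ s, 0 ≤ jumpProduct A (0, ε * r) (r, 0) (a, s) := by
  set S : Set ℝ := Prod.snd '' A + Icc (-1) 1
  have hSc : IsCompact S := (hA.isCompact.image continuous_snd).add isCompact_Icc
  have hloc : ∀ s ∈ S, ∀ᶠ z : ℝ × ℝ in 𝓝 (0, s),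
      0 ≤ jumpProduct A (0, ε * z.1) (z.1, 0) (a, z.2) := fun s _ =>
    ((continuous_sides ε a).tendsto' _ _ (by simp)).eventually
      (hA.eventually_jumpProduct_nonneg (ha s))
  have hsmall : ∀ᶠ r in 𝓝 (0 : ℝ), ε * r ∈ Icc (-1) 1 :=
    ((continuous_const_mul ε).tendsto' _ _ (mul_zero ε)).eventually
      (Icc_mem_nhds (by norm_num) (by norm_num))
  filter_upwards [hSc.eventually_forall_of_forall_eventually
    (P := fun r s => 0 ≤ jumpProduct A (0, ε * r) (r, 0) (a, s)) hloc, hsmall] with r hr hεr s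
  by_cases hs : s ∈ S
  · exact hr s hs
  · refine (jumpProduct_eq_zero (iff_of_false (fun h => hs ?_) fun h => hs ?_)).ge
    · exact ⟨s, ⟨_, h, rfl⟩, 0, by norm_num, add_zero s⟩
    · exact ⟨s + ε * r, ⟨_, h, by simp⟩, -(ε * r), ⟨by linarith [hεr.2], by linarith [hεr.1]⟩,
        add_neg_cancel_right _ _⟩

lemma eventually_jumpProduct_eq_one (hA : IsPolygonal A p q) {a s₀ : ℝ}
    (hx : (a, s₀) ∉ crossings p q) (hxe : (a, s₀) ∈ horizontalEdges p q) (ε : ℝ) :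
    ∀ᶠ r in 𝓝 (0 : ℝ), ∀ s ∈ Ioo (s₀ - ε * r) s₀,
      jumpProduct A (0, ε * r) (r, 0) (a, s) = 1 := by
  obtain ⟨c, hc0, hc⟩ := hA.exists_eventually_mem_iff_le_of_mem_horizontalEdges hx hxe
  refine eventually_forall_Ioo (((continuous_sides ε a).tendsto' _ _ (by simp)).eventually
    (eventually_forall_mem_vertices hc) |>.mono fun z hz hs => ?_)
  refine jumpProduct_eq_one_of_mem_iff_le (f := c • AddMonoidHom.snd ℝ ℝ) hz (by simp) ?_
  change c * z.2 ≤ c * s₀ ↔ c * s₀ < c * (z.2 + ε * z.1)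
  rcases hc0.lt_or_gt with hc0 | hc0
  · rw [mul_le_mul_left_of_neg hc0, mul_lt_mul_left_of_neg hc0]
    exact iff_of_false hs.2.not_ge (by linarith [hs.1])
  · rw [mul_le_mul_iff_right₀ hc0, mul_lt_mul_iff_right₀ hc0]
    exact iff_of_true hs.2.le (by linarith [hs.1])

end IsPolygonal

end Polygon
section VerticalLines

variable {A : Set (ℝ × ℝ)} {κ : Type*} {σ : κ → ℝ} {a h : ℝ}

lemma exists_mem_Icc_mem_frontier {s : ℝ} (hh : 0 ≤ h) (hs : ¬((a, s) ∈ A ↔ (a, s + h) ∈ A)) :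
    ∃ s' ∈ Icc s (s + h), (a, s') ∈ frontier A := by
  have hpre : IsPreconnected ((fun s' : ℝ => (a, s')) '' Icc s (s + h)) :=
    isPreconnected_Icc.image _ (by fun_prop)
  by_contra! hcon
  have hd : Disjoint ((fun s' : ℝ => (a, s')) '' Icc s (s + h)) (frontier A) :=
    disjoint_left.2 fun _ ⟨s', hs', hy⟩ => hy ▸ hcon s' hs'
  have hl : (a, s) ∈ (fun s' : ℝ => (a, s')) '' Icc s (s + h) := ⟨s, by simpa using hh, rfl⟩
  have hu : (a, s + h) ∈ (fun s' : ℝ => (a, s')) '' Icc s (s + h) :=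
    ⟨s + h, by simpa using hh, rfl⟩
  refine hs ?_
  rcases subset_interior_or_subset_compl_closure hpre hd with hS | hS
  · exact iff_of_true (interior_subset (hS hl)) (interior_subset (hS hu))
  · exact iff_of_false (mt (subset_closure ·) (hS hl)) (mt (subset_closure ·) (hS hu))

lemma abs_jumpProduct_le_sum_indicator [Fintype κ]
    (hσ : ∀ s, (a, s) ∈ frontier A → s ∈ range σ) (hh : 0 ≤ h) (v : ℝ × ℝ) (s : ℝ) :
    |jumpProduct A (0, h) v (a, s)| ≤
      ∑ i, (Icc (σ i - h) (σ i)).indicator (fun _ => (1 : ℝ)) s := by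
  have hnonneg (i : κ) : 0 ≤ (Icc (σ i - h) (σ i)).indicator (fun _ => (1 : ℝ)) s :=
    indicator_nonneg (fun _ _ => zero_le_one) s
  by_cases hs : (a, s) ∈ A ↔ (a, s + h) ∈ A
  · rw [jumpProduct_eq_zero (by simpa using hs), abs_zero]
    exact Finset.sum_nonneg fun i _ => hnonneg i
  · obtain ⟨s', hs', hfr⟩ := exists_mem_Icc_mem_frontier hh hs
    obtain ⟨i, rfl⟩ := hσ s' hfr
    refine le_trans ?_ (Finset.single_le_sum (fun i _ => hnonneg i) (Finset.mem_univ i))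
    rw [indicator_of_mem (show s ∈ Icc (σ i - h) (σ i) from ⟨by linarith [hs'.2], hs'.1⟩)]
    exact abs_jumpProduct_le_one

lemma integrable_jumpProduct_vertical [Finite κ] (hA : MeasurableSet A)
    (hσ : ∀ s, (a, s) ∈ frontier A → s ∈ range σ) (hh : 0 ≤ h) (v : ℝ × ℝ) :
    Integrable fun s => jumpProduct A (0, h) v (a, s) :=
  let := Fintype.ofFinite κ
  (integrable_finsetSum _ fun _ _ => integrable_indicator_Icc_const _ _ _).mono'
    ((measurable_jumpProduct hA _ _).comp measurable_prodMk_left).aestronglyMeasurable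
    (.of_forall fun s => abs_jumpProduct_le_sum_indicator hσ hh v s)

lemma abs_integral_jumpProduct_vertical_le [Fintype κ]
    (hσ : ∀ s, (a, s) ∈ frontier A → s ∈ range σ) (hh : 0 ≤ h) (v : ℝ × ℝ) :
    |∫ s, jumpProduct A (0, h) v (a, s)| ≤ Fintype.card κ * h := by
  have hint (i : κ) := integrable_indicator_Icc_const (σ i - h) (σ i) 1
  calc |∫ s, jumpProduct A (0, h) v (a, s)|
      ≤ ∫ s, |jumpProduct A (0, h) v (a, s)| := abs_integral_le_integral_abs
    _ ≤ ∫ s, ∑ i, (Icc (σ i - h) (σ i)).indicator (fun _ => (1 : ℝ)) s :=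
      integral_mono_of_nonneg (.of_forall fun s => abs_nonneg _)
        (integrable_finsetSum _ fun i _ => hint i)
        (.of_forall fun s => abs_jumpProduct_le_sum_indicator hσ hh v s)
    _ = ∑ _i : κ, h := by
      rw [integral_finsetSum _ fun i _ => hint i]
      simp only [integral_indicator_Icc_const (sub_le_self _ hh), sub_sub_cancel, mul_one]
    _ = Fintype.card κ * h := by rw [Finset.sum_const, Finset.card_univ, nsmul_eq_mul]

end VerticalLines

lemma eventually_pairwiseDisjoint_Ioo (S : Finset ℝ) :
    ∀ᶠ h in 𝓝 (0 : ℝ), (S : Set ℝ).PairwiseDisjoint fun s => Ioo (s - h) s := by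
  have hsep : ∀ᶠ h in 𝓝 (0 : ℝ), ∀ s ∈ S, ∀ s' ∈ S, s < s' → h < s' - s :=
    (eventually_all_finset S).2 fun s _ => (eventually_all_finset S).2 fun s' _ =>
      eventually_imp_distrib_left.2 fun hlt => gt_mem_nhds (sub_pos.2 hlt)
  filter_upwards [hsep] with h hh s hs s' hs' hne
  refine disjoint_left.2 fun x hx hx' => ?_
  rcases hne.lt_or_gt with hlt | hlt
  · linarith [hh s hs s' hs' hlt, hx.2, hx'.1]
  · linarith [hh s' hs' s hs hlt, hx.1, hx'.2]

lemma mul_card_le_integral {f : ℝ → ℝ} (hf0 : 0 ≤ f) (hf : Integrable f) {S : Finset ℝ} {h : ℝ}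
    (hh : 0 ≤ h) (hS : (S : Set ℝ).PairwiseDisjoint fun s => Ioo (s - h) s)
    (h1 : ∀ s ∈ S, ∀ x ∈ Ioo (s - h) s, f x = 1) : h * S.card ≤ ∫ x, f x := by
  have hU : MeasurableSet (⋃ s ∈ S, Ioo (s - h) s) :=
    S.measurableSet_biUnion fun s _ => measurableSet_Ioo
  calc h * S.card = ∑ s ∈ S, volume.real (Ioo (s - h) s) := by
        simp [hh, mul_comm]
    _ = volume.real (⋃ s ∈ S, Ioo (s - h) s) :=
        (measureReal_biUnion_finset hS (fun s _ => measurableSet_Ioo)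
          fun s _ => measure_Ioo_lt_top.ne).symm
    _ = ∫ x in ⋃ s ∈ S, Ioo (s - h) s, f x := by
        rw [setIntegral_congr_fun hU fun x hx => ?_, setIntegral_const, smul_eq_mul, mul_one]
        obtain ⟨s, hs, hx⟩ := mem_iUnion₂.1 hx
        exact h1 s hs x hx
    _ ≤ ∫ x, f x := setIntegral_le_integral hf (.of_forall hf0)

lemma eventually_sub_le_integral_of_dominated {X κ : Type*} [MeasurableSpace X] {μ : Measure X}
    {l : Filter κ} [l.IsCountablyGenerated] {F : κ → X → ℝ} {N g : X → ℝ}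
    (hF : ∀ r, Integrable (F r) μ) (hN : Integrable N μ) (hg : Integrable g μ)
    (hle : ∀ᶠ r in l, ∀ᵐ x ∂μ, |F r x| ≤ g x) (hlim : ∀ᵐ x ∂μ, ∀ᶠ r in l, N x ≤ F r x)
    {η : ℝ} (hη : 0 < η) : ∀ᶠ r in l, ∫ x, N x ∂μ - η ≤ ∫ x, F r x ∂μ := by
  have hmin (r : κ) : Integrable (fun x => min (F r x) (N x)) μ := (hF r).inf hN
  have htend : Tendsto (fun r => ∫ x, min (F r x) (N x) ∂μ) l (𝓝 (∫ x, N x ∂μ)) := by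
    refine tendsto_integral_filter_of_dominated_convergence (fun x => g x + |N x|)
      (.of_forall fun r => (hmin r).1) ?_ (hg.add hN.abs) ?_
    · filter_upwards [hle] with r hr
      filter_upwards [hr] with x hx
      exact (abs_min_le_max_abs_abs).trans (max_le_iff.2
        ⟨hx.trans (le_add_of_nonneg_right (abs_nonneg _)),
          le_add_of_nonneg_left ((abs_nonneg _).trans hx)⟩)
    · filter_upwards [hlim] with x hx
      exact tendsto_const_nhds.congr' (hx.mono fun r hr => (min_eq_right hr).symm)
  filter_upwards [htend.eventually (lt_mem_nhds (sub_lt_self _ hη))] with r hr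
  exact hr.le.trans (integral_mono (hmin r) (hF r) fun x => min_le_left _ _)
namespace IsPolygonal

variable {ι : Type*} {p q : ι → ℝ × ℝ} {A : Set (ℝ × ℝ)} {a ε : ℝ}

lemma exists_range_of_mem_frontier (hA : IsPolygonal A p q) (ha : ∀ i, (p i).1 ≠ a) :
    ∃ σ : ι → ℝ, ∀ s, (a, s) ∈ frontier A → s ∈ range σ := by
  refine ⟨fun i => (p i).2 + (a - (p i).1) / ((q i).1 - (p i).1) * ((q i).2 - (p i).2), ?_⟩
  intro s hs
  obtain ⟨i, hi⟩ := mem_iUnion.1 (hA.frontier_eq ▸ hs)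
  rw [segment_eq_image'] at hi
  obtain ⟨θ, -, hθ⟩ := hi
  obtain ⟨h1, h2⟩ := Prod.ext_iff.1 hθ
  simp only [Prod.fst_add, Prod.snd_add, Prod.smul_fst, Prod.smul_snd, smul_eq_mul, Prod.fst_sub,
    Prod.snd_sub] at h1 h2
  have hne : (q i).1 - (p i).1 ≠ 0 := fun h => ha i (by simpa [h] using h1)
  refine ⟨i, ?_⟩
  rw [← h1, ← h2]
  field_simp
  ring

lemma ae_good_abscissa [Finite ι] (p q : ι → ℝ × ℝ) :
    ∀ᵐ a, (∀ i, (p i).1 ≠ a) ∧ ∀ s, (a, s) ∉ crossings p q := by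
  filter_upwards [((finite_range fun i => (p i).1).countable.ae_notMem volume),
    ((finite_crossings p q).image Prod.fst).countable.ae_notMem volume] with a h1 h2
  exact ⟨fun i hi => h1 ⟨i, hi⟩, fun s hs => h2 ⟨_, hs, rfl⟩⟩

lemma eventually_mul_sum_indicator_le [Finite ι] (hA : IsPolygonal A p q) (ha : ∀ i, (p i).1 ≠ a)
    (hac : ∀ s, (a, s) ∉ crossings p q) (hε : 0 ≤ ε) (T : Finset ℝ) : ∀ᶠ r in 𝓝[>] 0,
      ε * r * ∑ s ∈ T, (horizontalEdges p q).indicator 1 (a, s) ≤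
        ∫ s, jumpProduct A (0, ε * r) (r, 0) (a, s) := by
  classical
  cases nonempty_fintype ι
  obtain ⟨σ, hσ⟩ := hA.exists_range_of_mem_frontier ha
  have hsep : ∀ᶠ r in 𝓝 (0 : ℝ), ((T.filter fun s => (a, s) ∈ horizontalEdges p q : Finset ℝ) :
      Set ℝ).PairwiseDisjoint fun s => Ioo (s - ε * r) s :=
    ((continuous_const_mul ε).tendsto' _ _ (mul_zero ε)).eventually
      (eventually_pairwiseDisjoint_Ioo _)
  have hone : ∀ᶠ r in 𝓝 (0 : ℝ), ∀ s₀ ∈ T.filter fun s => (a, s) ∈ horizontalEdges p q,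
      ∀ s ∈ Ioo (s₀ - ε * r) s₀, jumpProduct A (0, ε * r) (r, 0) (a, s) = 1 :=
    (eventually_all_finset _).2 fun s₀ hs₀ =>
      hA.eventually_jumpProduct_eq_one (hac s₀) (Finset.mem_filter.1 hs₀).2 ε
  filter_upwards [nhdsWithin_le_nhds hsep, nhdsWithin_le_nhds hone, self_mem_nhdsWithin,
    nhdsWithin_le_nhds (hA.eventually_forall_jumpProduct_nonneg hac ε)] with r hsep hone hr hnn
  have hεr : 0 ≤ ε * r := mul_nonneg hε (le_of_lt hr)
  simpa only [Finset.natCast_card_filter, indicator_apply, Pi.one_apply] using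
    mul_card_le_integral hnn (integrable_jumpProduct_vertical hA.isCompact.measurableSet hσ hεr _)
      hεr hsep hone

lemma abs_integral_jumpProduct_le_indicator [Fintype ι] (hA : IsPolygonal A p q)
    (ha : ∀ i, (p i).1 ≠ a) {h : ℝ} (hh : 0 ≤ h) (v : ℝ × ℝ) :
    |∫ s, jumpProduct A (0, h) v (a, s)| ≤
      (Prod.fst '' A).indicator (fun _ => Fintype.card ι * h) a := by
  by_cases haA : a ∈ Prod.fst '' A
  · obtain ⟨σ, hσ⟩ := hA.exists_range_of_mem_frontier ha
    rw [indicator_of_mem haA]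
    exact abs_integral_jumpProduct_vertical_le hσ hh v
  · have hzero (s : ℝ) : jumpProduct A (0, h) v (a, s) = 0 :=
      jumpProduct_eq_zero (iff_of_false (fun hs => haA ⟨_, hs, rfl⟩)
        fun hs => haA ⟨_, hs, by simp⟩)
    simp only [hzero, integral_zero, abs_zero, indicator_of_notMem haA, le_refl]

lemma eventually_mul_sum_len_le [Finite ι] (hA : IsPolygonal A p q) (hε : 0 < ε) {η : ℝ}
    (hη : 0 < η) (T : Finset ℝ) :
    ∀ᶠ r in 𝓝[>] 0, ε * r * (∑ s ∈ T, len (horizontalEdges p q) s - η) ≤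
      ∫ y, jumpProduct A (0, ε * r) (r, 0) y := by
  cases nonempty_fintype ι
  have hE := isCompact_horizontalEdges p q
  have hintE (s : ℝ) : Integrable fun a => (horizontalEdges p q).indicator (1 : ℝ × ℝ → ℝ) (a, s) :=
    (integrable_indicator_iff (isCompact_slice hE s).measurableSet).2
      (integrableOn_const (isCompact_slice hE s).measure_lt_top.ne)
  have hint (r : ℝ) := integrable_jumpProduct hA.isCompact (0, ε * r) (r, 0)
  have hsum : ∑ s ∈ T, len (horizontalEdges p q) s =
      ∫ a, ∑ s ∈ T, (horizontalEdges p q).indicator 1 (a, s) := by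
    rw [integral_finsetSum _ fun s _ => hintE s]
    exact Finset.sum_congr rfl fun s _ => (integral_indicator_slice hE s).symm
  have hbound : ∀ᶠ r in 𝓝[>] (0 : ℝ), ∀ᵐ a,
      |(∫ s, jumpProduct A (0, ε * r) (r, 0) (a, s)) / (ε * r)| ≤
        (Prod.fst '' A).indicator (fun _ => (Fintype.card ι : ℝ)) a := by
    filter_upwards [self_mem_nhdsWithin] with r hr
    filter_upwards [ae_good_abscissa p q] with a ha
    have hεr : 0 < ε * r := mul_pos hε hr
    rw [abs_div, abs_of_pos hεr, div_le_iff₀ hεr, ← indicator_mul_const]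
    exact hA.abs_integral_jumpProduct_le_indicator ha.1 hεr.le _
  have hlim : ∀ᵐ a, ∀ᶠ r in 𝓝[>] (0 : ℝ), ∑ s ∈ T, (horizontalEdges p q).indicator 1 (a, s) ≤
      (∫ s, jumpProduct A (0, ε * r) (r, 0) (a, s)) / (ε * r) := by
    filter_upwards [ae_good_abscissa p q] with a ha
    filter_upwards [hA.eventually_mul_sum_indicator_le ha.1 ha.2 hε.le T, self_mem_nhdsWithin]
      with r hr hr0
    exact (le_div_iff₀' (mul_pos hε hr0)).2 hr
  have hfst : IsCompact (Prod.fst '' A) := hA.isCompact.image continuous_fst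
  filter_upwards [eventually_sub_le_integral_of_dominated
    (fun r => (hint r).integral_prod_left.div_const _) (integrable_finsetSum _ fun s _ => hintE s)
    ((integrable_indicator_iff hfst.measurableSet).2 (integrableOn_const hfst.measure_lt_top.ne))
    hbound hlim hη, self_mem_nhdsWithin] with r hr hr0
  rwa [← hsum, integral_div, le_div_iff₀' (mul_pos hε hr0), ← integral_prod _ (hint r)] at hr

end IsPolygonal
lemma mem_closedBall_of_mem_segment {p q : ℝ × ℝ} {a s s' t : ℝ} (hpq : p.2 ≠ q.2)
    (h : (a, s') ∈ segment ℝ p q) (hs' : s' ∈ Icc s (s + t)) :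
    a ∈ Metric.closedBall (p.1 + (q.1 - p.1) / (q.2 - p.2) * (s - p.2))
      (|(q.1 - p.1) / (q.2 - p.2)| * t) := by
  rw [segment_eq_image'] at h
  obtain ⟨θ, -, hθ⟩ := h
  obtain ⟨h1, h2⟩ := Prod.ext_iff.1 hθ
  simp only [Prod.fst_add, Prod.snd_add, Prod.smul_fst, Prod.smul_snd, smul_eq_mul, Prod.fst_sub,
    Prod.snd_sub] at h1 h2
  have hne : q.2 - p.2 ≠ 0 := sub_ne_zero.2 hpq.symm
  have ha : a - (p.1 + (q.1 - p.1) / (q.2 - p.2) * (s - p.2)) =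
      (q.1 - p.1) / (q.2 - p.2) * (s' - s) := by
    rw [← h1, ← h2]
    field_simp
    ring
  rw [mem_closedBall_iff_norm, Real.norm_eq_abs, ha, abs_mul, abs_of_nonneg (sub_nonneg.2 hs'.1)]
  exact mul_le_mul_of_nonneg_left (sub_le_iff_le_add'.2 hs'.2) (abs_nonneg _)

namespace IsPolygonal

variable {ι : Type*} [Fintype ι] {p q : ι → ℝ × ℝ} {A : Set (ℝ × ℝ)} {s t : ℝ}

lemma symmDiff_slice_subset (hA : IsPolygonal A p q) (ht : 0 ≤ t) :
    symmDiff (slice A s) (slice A (s + t)) ⊆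
      (⋃ i ∈ Finset.univ, Metric.closedBall
        ((p i).1 + ((q i).1 - (p i).1) / ((q i).2 - (p i).2) * (s - (p i).2))
        (|((q i).1 - (p i).1) / ((q i).2 - (p i).2)| * t)) ∪
      ⋃ x ∈ (Finset.univ.image fun i => (p i).2).filter (· ∈ Icc s (s + t)),
        slice (horizontalEdges p q) x := by
  intro a ha
  have hjump : ¬((a, s) ∈ A ↔ (a, s + t) ∈ A) := by
    rwa [mem_symmDiff, ← xor_def, xor_iff_not_iff] at ha
  obtain ⟨s', hs', hfr⟩ := exists_mem_Icc_mem_frontier ht hjump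
  obtain ⟨i, hi⟩ := mem_iUnion.1 (hA.frontier_eq ▸ hfr)
  by_cases hpq : (p i).2 = (q i).2
  · have hs : s' = (p i).2 := by
      obtain ⟨c, hc⟩ := exists_sub_eq_smul_of_mem_segment hi (left_mem_segment ℝ (p i) (q i))
      simpa [hpq, sub_eq_zero] using congrArg Prod.snd hc
    refine Or.inr (mem_iUnion₂.2 ⟨s', ?_, mem_iUnion₂.2 ⟨i, hpq, hi⟩⟩)
    exact Finset.mem_filter.2 ⟨Finset.mem_image.2 ⟨i, Finset.mem_univ i, hs.symm⟩, hs'⟩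
  · exact Or.inl (mem_iUnion₂.2 ⟨i, Finset.mem_univ i, mem_closedBall_of_mem_segment hpq hi hs'⟩)

lemma lipschitzUpToJumps_len (hA : IsPolygonal A p q) : LipschitzUpToJumps
    (∑ i, 2 * |((q i).1 - (p i).1) / ((q i).2 - (p i).2)|) (Finset.univ.image fun i => (p i).2)
    (len (horizontalEdges p q)) (len A) := by
  intro s t ht
  have hfin (s : ℝ) : volume (slice A s) ≠ ⊤ := (isCompact_slice hA.isCompact s).measure_lt_top.ne
  have hmeas (s : ℝ) : NullMeasurableSet (slice A s) :=
    (isCompact_slice hA.isCompact s).measurableSet.nullMeasurableSet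
  calc |len A s - len A (s + t)|
      ≤ volume.real (symmDiff (slice A s) (slice A (s + t))) :=
        abs_measureReal_sub_le_measureReal_symmDiff' (hmeas _) (hmeas _) (hfin _) (hfin _)
    _ ≤ _ := measureReal_mono (hA.symmDiff_slice_subset ht) <|
        ((Finset.univ.isCompact_biUnion fun i _ => isCompact_closedBall _ _).union
          (Finset.isCompact_biUnion _ fun x _ => isCompact_slice
            (isCompact_horizontalEdges p q) x)).measure_lt_top.ne
    _ ≤ _ := measureReal_union_le _ _
    _ ≤ _ := add_le_add (measureReal_biUnion_finset_le _ _) (measureReal_biUnion_finset_le _ _)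
    _ = _ := by
      simp only [Finset.sum_mul, Finset.sum_filter, indicator_apply, len,
        Real.volume_real_closedBall (mul_nonneg (abs_nonneg _) ht), mul_assoc]

end IsPolygonal
section ConvexUpperBound

variable {K : Set (ℝ × ℝ)} {U : Set ℝ} {a b c s s' h r t β σ : ℝ}

lemma mem_of_mem_uIcc (hK : Convex ℝ K) (hs : (a, s) ∈ K) (hs' : (a, s') ∈ K) {x : ℝ}
    (hx : x ∈ uIcc s s') : (a, x) ∈ K := by
  rw [← segment_eq_uIcc] at hx
  obtain ⟨m, n, hm, hn, hmn, rfl⟩ := hx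
  simpa [← add_mul, hmn] using hK hs hs' hm hn hmn

lemma volume_exitSet_vertical_le (hK : Convex ℝ K) (a h : ℝ) (v : ℝ × ℝ) :
    volume ((a, ·) ⁻¹' exitSet K (0, h) v) ≤ ENNReal.ofReal |h| := by
  have hgap : ∀ s s', (a, s) ∈ exitSet K (0, h) v → (a, s') ∈ exitSet K (0, h) v → s ≤ s' →
      s' - s ≤ |h| := by
    rintro s s' ⟨hs, -, hsh, -⟩ ⟨hs', -, hsh', -⟩ hle
    rw [Prod.mk_add_mk, add_zero] at hsh hsh'
    by_contra! hlt
    rcases le_total 0 h with hh | hh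
    · rw [abs_of_nonneg hh] at hlt
      exact hsh (mem_of_mem_uIcc hK hs hs' (uIcc_of_le hle ▸ ⟨by linarith, by linarith⟩))
    · rw [abs_of_nonpos hh] at hlt
      exact hsh' (mem_of_mem_uIcc hK hs hs' (uIcc_of_le hle ▸ ⟨by linarith, by linarith⟩))
  refine (Real.volume_le_diam _).trans (Metric.ediam_le fun s hs s' hs' => ?_)
  rw [edist_dist, Real.dist_eq]
  refine ENNReal.ofReal_le_ofReal ?_
  rcases le_total s s' with hle | hle
  · rw [abs_sub_comm, abs_of_nonneg (sub_nonneg.2 hle)]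
    exact hgap s s' hs hs' hle
  · rw [abs_of_nonneg (sub_nonneg.2 hle)]
    exact hgap s' s hs' hs hle

lemma mul_abs_sub_lt_of_notMem (hK : Convex ℝ K) (hs : (a, s) ∈ K) (hc : (c, β) ∈ K)
    (hb : (a + t * (c - a), s) ∈ K) (hbh : (a + t * (c - a), s + h) ∉ K)
    (hh : 0 ≤ h * (β - s)) (ht : t ∈ Icc 0 1) : t * |β - s| < |h| := by
  have hz : (a + t * (c - a), s + t * (β - s)) ∈ K := by
    simpa using hK.add_smul_sub_mem hs hc ht
  contrapose! hbh
  rw [← abs_of_nonneg ht.1, ← abs_mul] at hbh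
  refine mem_of_mem_uIcc hK hb hz (mem_uIcc.2 ?_)
  have hsign : 0 ≤ h * (t * (β - s)) := by
    rw [mul_left_comm]
    exact mul_nonneg ht.1 hh
  rcases mul_nonneg_iff.1 hsign with ⟨h0, hm0⟩ | ⟨h0, hm0⟩
  · rw [abs_of_nonneg h0, abs_of_nonneg hm0] at hbh
    exact Or.inl ⟨by linarith, by linarith⟩
  · rw [abs_of_nonpos h0, abs_of_nonpos hm0] at hbh
    exact Or.inr ⟨by linarith, by linarith⟩

lemma fst_mem_of_mem_exitSet (hK : Convex ℝ K) (hc : (c, β) ∈ K)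
    (hh : ∀ y ∈ K, 0 ≤ h * (β - y.2)) (hr : 0 < r) {D : ℝ} (hD : ∀ y ∈ K, |y.1 - c| ≤ D)
    (hU : ∀ y ∈ K, r * |β - y.2| ≤ |h| * D → y.1 ∈ U) {y : ℝ × ℝ}
    (hy : y ∈ exitSet K (0, h) (r, 0)) : y.1 ∈ U ∪ Icc (c - r) c := by
  obtain ⟨a, s⟩ := y
  obtain ⟨hs, hsr, hsh, hsrh⟩ := hy
  simp only [Prod.mk_add_mk, add_zero] at hsr hsh hsrh
  by_cases hac : a ∈ Icc (c - r) c
  · exact Or.inr hac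
  refine Or.inl (hU _ hs ?_)
  have hclear {w : ℝ} (hw : 0 < w) (hwD : w ≤ D) (hx : r / w * |β - s| < |h|) :
      r * |β - s| ≤ |h| * D := by
    rw [div_mul_eq_mul_div, div_lt_iff₀ hw] at hx
    exact hx.le.trans (mul_le_mul_of_nonneg_left hwD (abs_nonneg h))
  have hfrac {w : ℝ} (hw : 0 < w) (hrw : r ≤ w) : r / w ∈ Icc 0 1 :=
    ⟨div_nonneg hr.le hw.le, (div_le_one hw).2 hrw⟩
  rcases lt_or_ge a (c - r) with hlt | hge
  · have hw : 0 < c - a := by linarith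
    have hb : a + r / (c - a) * (c - a) = a + r := by rw [div_mul_cancel₀ _ hw.ne']
    refine hclear hw ?_ (mul_abs_sub_lt_of_notMem hK hs hc (hb ▸ hsr) (hb ▸ hsrh) (hh _ hs)
      (hfrac hw (by linarith)))
    exact (neg_sub a c ▸ neg_le_abs (a - c)).trans (hD _ hs)
  · have hca : c < a := lt_of_not_ge fun h => hac ⟨hge, h⟩
    have hw : 0 < a + r - c := by linarith
    have hb : a + r + r / (a + r - c) * (c - (a + r)) = a := by field_simp; ring
    refine hclear hw ((le_abs_self _).trans (hD _ hsr)) (mul_abs_sub_lt_of_notMem hK hsr hc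
      (by rwa [hb]) (by rwa [hb]) (hh _ hs) (hfrac hw (by linarith)))

lemma volume_exitSet_le (hK : Convex ℝ K) (hKc : IsCompact K) (hc : (c, β) ∈ K)
    (hh : ∀ y ∈ K, 0 ≤ h * (β - y.2)) (hr : 0 < r) {D : ℝ} (hD : ∀ y ∈ K, |y.1 - c| ≤ D)
    (hUm : MeasurableSet U) (hU : ∀ y ∈ K, r * |β - y.2| ≤ |h| * D → y.1 ∈ U) :
    volume (exitSet K (0, h) (r, 0)) ≤ ENNReal.ofReal |h| * (volume U + ENNReal.ofReal r) := by
  have hm := measurableSet_exitSet hKc.measurableSet (0, h) (r, 0)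
  calc volume (exitSet K (0, h) (r, 0))
      = ∫⁻ a, volume ((a, ·) ⁻¹' exitSet K (0, h) (r, 0)) := by
        rw [Measure.volume_eq_prod, Measure.prod_apply hm]
    _ ≤ ∫⁻ a, (U ∪ Icc (c - r) c).indicator (fun _ => ENNReal.ofReal |h|) a := by
        refine lintegral_mono fun a => ?_
        by_cases ha : a ∈ U ∪ Icc (c - r) c
        · rw [indicator_of_mem ha]
          exact volume_exitSet_vertical_le hK a h _
        · have : (a, ·) ⁻¹' exitSet K (0, h) (r, 0) = ∅ := eq_empty_of_forall_notMem
            fun s hs => ha (fst_mem_of_mem_exitSet hK hc hh hr hD hU hs)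
          rw [this, measure_empty]
          exact bot_le
    _ = ENNReal.ofReal |h| * volume (U ∪ Icc (c - r) c) :=
        lintegral_indicator_const (hUm.union measurableSet_Icc) _
    _ ≤ ENNReal.ofReal |h| * (volume U + ENNReal.ofReal r) := by
        gcongr
        exact (measure_union_le _ _).trans_eq (by rw [Real.volume_Icc, sub_sub_cancel])

lemma eventually_fst_mem_of_abs_sub_le (hKc : IsCompact K) (hU : IsOpen U)
    (hβ : slice K β ⊆ U) : ∀ᶠ η in 𝓝 (0 : ℝ), ∀ y ∈ K, |β - y.2| ≤ η → y.1 ∈ U := by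
  refine hKc.eventually_forall_of_forall_eventually fun y hy => ?_
  rcases eq_or_ne y.2 β with rfl | hne
  · have hyU : ∀ᶠ z : ℝ × ℝ × ℝ in 𝓝 (0, y), z.2.1 ∈ U :=
      (by fun_prop : Continuous fun z : ℝ × ℝ × ℝ => z.2.1).continuousAt.eventually
        (hU.mem_nhds (hβ hy))
    exact hyU.mono fun z hz _ => hz
  · have hlt : ∀ᶠ z : ℝ × ℝ × ℝ in 𝓝 (0, y), z.1 < |β - z.2.2| :=
      (continuous_fst.tendsto (0, y)).eventually_lt
        (by fun_prop : Continuous fun z : ℝ × ℝ × ℝ => |β - z.2.2|).continuousAt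
        (abs_pos.2 (sub_ne_zero.2 hne.symm))
    exact hlt.mono fun z hz hle => absurd hle hz.not_ge

lemma eventually_volume_exitSet_le (hK : Convex ℝ K) (hKc : IsCompact K)
    (hβ : β ∈ Prod.snd '' K) (hσ : |σ| = 1) (hσβ : ∀ y ∈ K, 0 ≤ σ * (β - y.2))
    {δ : ℝ} (hδ : 0 < δ) : ∀ᶠ ε in 𝓝[>] 0, ∀ᶠ r in 𝓝[>] 0,
      volume.real (exitSet K (0, σ * (ε * r)) (r, 0)) ≤ ε * r * (len K β + δ) := by
  obtain ⟨⟨c, β⟩, hc, rfl⟩ := hβ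
  obtain ⟨D, hD⟩ := hKc.exists_bound_of_continuousOn (f := fun y => y.1 - c) (by fun_prop)
  have hfin := (isCompact_slice hKc β).measure_ne_top (μ := volume)
  obtain ⟨U, hKU, hUo, hU⟩ := (slice K β).exists_isOpen_lt_add hfin
    (ENNReal.ofReal_pos.2 (half_pos hδ)).ne'
  have hη := ((continuous_mul_const D).tendsto' 0 0 (zero_mul D)).eventually
    (eventually_fst_mem_of_abs_sub_le hKc hUo hKU)
  filter_upwards [nhdsWithin_le_nhds hη, self_mem_nhdsWithin] with ε hε hε0
  filter_upwards [Ioc_mem_nhdsGT (half_pos hδ)] with r ⟨hr0, hr⟩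
  have hεr : 0 < ε * r := mul_pos hε0 hr0
  have habs : |σ * (ε * r)| = ε * r := by rw [abs_mul, hσ, one_mul, abs_of_pos hεr]
  have hsign (y : ℝ × ℝ) (hy : y ∈ K) : 0 ≤ σ * (ε * r) * (β - y.2) := by
    rw [mul_right_comm]
    exact mul_nonneg (hσβ y hy) hεr.le
  have hmem (y : ℝ × ℝ) (hy : y ∈ K) (hle : r * |β - y.2| ≤ |σ * (ε * r)| * D) : y.1 ∈ U := by
    rw [habs, mul_comm ε r, mul_assoc] at hle
    exact hε y hy (le_of_mul_le_mul_left hle hr0)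
  refine ENNReal.toReal_le_of_le_ofReal (by positivity [len_nonneg (A := K) β]) ?_
  calc volume (exitSet K (0, σ * (ε * r)) (r, 0))
      ≤ ENNReal.ofReal |σ * (ε * r)| * (volume U + ENNReal.ofReal r) :=
        volume_exitSet_le hK hKc hc hsign hr0 hD hUo.measurableSet hmem
    _ ≤ ENNReal.ofReal (ε * r) * (ENNReal.ofReal (len K β) + ENNReal.ofReal (δ / 2) +
          ENNReal.ofReal (δ / 2)) := by
        rw [habs, len, ofReal_measureReal hfin]
        gcongr
    _ = ENNReal.ofReal (ε * r * (len K β + δ)) := by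
        rw [← ENNReal.ofReal_add (len_nonneg β) (half_pos hδ).le,
          ← ENNReal.ofReal_add (add_nonneg (len_nonneg β) (half_pos hδ).le) (half_pos hδ).le,
          ← ENNReal.ofReal_mul hεr.le, add_assoc, add_halves]

end ConvexUpperBound

section HorizontalEdge

lemma add_mul_nonpos_of_sum_le {σ : Type*} {Λ : σ → ℝ} (hΛ : 0 ≤ Λ) {S : ℝ}
    {T : Finset σ} {α β γ : σ} (h₁ : ∀ T : Finset σ, ∑ s ∈ T, Λ s ≤ S)
    (h₂ : S ^ 2 ≤ ∑ s ∈ T, Λ s ^ 2 + 2 * (Λ α * Λ β)) (hαβ : α ≠ β) (hαγ : α ≠ γ) (hβγ : β ≠ γ) :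
    (Λ α + Λ β) * Λ γ ≤ 0 := by
  classical
  set R : Finset σ := T \ {α, β, γ}
  have hdis : Disjoint R {α, β, γ} := Finset.sdiff_disjoint
  have hsum (g : σ → ℝ) : ∑ s ∈ R ∪ {α, β, γ}, g s = ∑ s ∈ R, g s + (g α + (g β + g γ)) := by
    rw [Finset.sum_union hdis, Finset.sum_insert (by simp [hαβ, hαγ]), Finset.sum_pair hβγ]
  have hT : ∑ s ∈ T, Λ s ^ 2 ≤ ∑ s ∈ R ∪ {α, β, γ}, Λ s ^ 2 :=
    Finset.sum_le_sum_of_subset_of_nonneg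
      (Finset.subset_union_left.trans Finset.sdiff_union_self_eq_union.ge) fun s _ _ => sq_nonneg _
  have hR : ∑ s ∈ R, Λ s ^ 2 ≤ (∑ s ∈ R, Λ s) ^ 2 :=
    Finset.sum_sq_le_sq_sum_of_nonneg fun s _ => hΛ s
  have hR0 : 0 ≤ ∑ s ∈ R, Λ s := Finset.sum_nonneg fun s _ => hΛ s
  have hS : (∑ s ∈ R ∪ {α, β, γ}, Λ s) ^ 2 ≤ S ^ 2 :=
    pow_le_pow_left₀ (Finset.sum_nonneg fun s _ => hΛ s) (h₁ _) 2
  rw [hsum] at hS hT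
  nlinarith [mul_nonneg (hΛ α) hR0, mul_nonneg (hΛ β) hR0, mul_nonneg (hΛ γ) hR0]

lemma isGreatest_sub {G : Type*} [AddCommGroup G] [PartialOrder G] [IsOrderedAddMonoid G]
    {S : Set G} {a b : G} (ha : IsLeast S a) (hb : IsGreatest S b) : IsGreatest (S - S) (b - a) :=
  ⟨sub_mem_sub hb.1 ha.1, by
    rintro _ ⟨x, hx, y, hy, rfl⟩
    exact sub_le_sub (hb.2 hx) (ha.2 hy)⟩

variable {A K : Set (ℝ × ℝ)} {α β α' β' : ℝ}

lemma isGreatest_snd_image_sub (hα : IsLeast (Prod.snd '' A) α)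
    (hβ : IsGreatest (Prod.snd '' A) β) : IsGreatest (Prod.snd '' (A - A)) (β - α) := by
  exact image_sub (AddMonoidHom.snd ℝ ℝ) ▸ isGreatest_sub hα hβ

lemma exists_snd_image_eq_Icc (hK : Convex ℝ K) (hKc : IsCompact K)
    (hKi : (interior K).Nonempty) : ∃ α β, α < β ∧ Prod.snd '' K = Icc α β := by
  have hconn : IsConnected (Prod.snd '' K) :=
    (hK.isConnected (hKi.mono interior_subset)).image _ continuous_snd.continuousOn
  have heq := eq_Icc_of_connected_compact hconn (hKc.image continuous_snd)
  have hsub := isOpenMap_snd.image_interior_subset K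
  rw [heq, interior_Icc] at hsub
  exact ⟨_, _, nonempty_Ioo.1 ((hKi.image _).mono hsub), heq⟩

lemma len_add_len_eq_zero_of_finite (hα : IsLeast (Prod.snd '' K) α)
    (hβ : IsGreatest (Prod.snd '' K) β) (h : (slice (K - K) (β - α)).Finite) :
    len K α + len K β = 0 := by
  have hne {s : ℝ} (hs : s ∈ Prod.snd '' K) : slice K s ≠ ∅ := by
    obtain ⟨x, hx, rfl⟩ := hs
    exact Nonempty.ne_empty ⟨x.1, hx⟩
  have hlen {s : ℝ} (hs : (slice K s).Finite) : len K s = 0 := by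
    rw [len, measureReal_def, hs.measure_zero, ENNReal.toReal_zero]
  rw [slice_sub_eq hα hβ, finite_sub] at h
  simp only [hne hα.1, hne hβ.1, or_false] at h
  rw [hlen h.1, hlen h.2, add_zero]

lemma eventually_integral_jumpProduct_le (hK : Convex ℝ K) (hKc : IsCompact K)
    (hα : IsLeast (Prod.snd '' K) α) (hβ : IsGreatest (Prod.snd '' K) β) {δ : ℝ} (hδ : 0 < δ) :
    ∀ᶠ ε in 𝓝[>] 0, ∀ᶠ r in 𝓝[>] 0,
      ∫ y, jumpProduct K (0, ε * r) (r, 0) y ≤ ε * r * (len K α + len K β + δ) := by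
  filter_upwards [eventually_volume_exitSet_le hK hKc hα.1 (σ := -1) (by simp)
      (fun y hy => by linarith [hα.2 (mem_image_of_mem _ hy)]) (half_pos hδ),
    eventually_volume_exitSet_le hK hKc hβ.1 (σ := 1) (by simp)
      (fun y hy => by linarith [hβ.2 (mem_image_of_mem _ hy)]) (half_pos hδ)] with ε hα hβ
  filter_upwards [hα, hβ] with r hα hβ
  have h := integral_jumpProduct_le hKc (0, ε * r) (r, 0)
  rw [neg_one_mul] at hα
  rw [one_mul] at hβ
  rw [Prod.neg_mk, neg_zero] at h
  linarith

variable {ι : Type*} {p q : ι → ℝ × ℝ}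

lemma len_horizontalEdges_pos [Finite ι] {i : ι} (hne : p i ≠ q i) (hi : (p i).2 = (q i).2) :
    0 < len (horizontalEdges p q) (p i).2 := by
  have hsub : uIcc (p i).1 (q i).1 ⊆ slice (horizontalEdges p q) (p i).2 := by
    rw [← segment_eq_uIcc]
    rintro a ⟨u, v, hu, hv, huv, rfl⟩
    refine mem_iUnion₂.2 ⟨i, hi, u, v, hu, hv, huv, Prod.ext rfl ?_⟩
    simp only [Prod.snd_add, Prod.smul_snd, smul_eq_mul, ← hi, ← add_mul, huv, one_mul]
  calc 0 < |(q i).1 - (p i).1| := abs_pos.2 (sub_ne_zero.2 fun h => hne (Prod.ext h.symm hi))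
    _ = volume.real (uIcc (p i).1 (q i).1) := Real.volume_real_interval.symm
    _ ≤ len (horizontalEdges p q) (p i).2 :=
      measureReal_mono hsub (isCompact_slice (isCompact_horizontalEdges p q) _).measure_lt_top.ne

namespace IsPolygonal

lemma finite_slice [Finite ι] (hA : IsPolygonal A p q) {s : ℝ}
    (hs : ∀ a, (a, s) ∉ interior A) (h0 : len (horizontalEdges p q) s = 0) :
    (slice A s).Finite := by
  have hsub : slice A s ⊆ ⋃ i, slice (segment ℝ (p i) (q i)) s := fun a ha => by
    have hfr : (a, s) ∈ frontier A := ⟨subset_closure ha, hs a⟩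
    rw [hA.frontier_eq] at hfr
    simpa only [slice, mem_iUnion, mem_preimage] using hfr
  refine (finite_iUnion fun i => Set.Subsingleton.finite fun a ha b hb => ?_).subset hsub
  obtain ⟨c, hc⟩ := exists_sub_eq_smul_of_mem_segment ha hb
  obtain ⟨d, hd⟩ := exists_sub_eq_smul_of_mem_segment ha (left_mem_segment ℝ (p i) (q i))
  have hi : (p i).2 ≠ (q i).2 := fun hi => by
    have hsi : s = (p i).2 := by simpa [hi, sub_eq_zero] using congrArg Prod.snd hd
    exact (len_horizontalEdges_pos (hA.ne i) hi).ne' (hsi ▸ h0)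
  have hc0 : c = 0 := by simpa [hi.symm, sub_eq_zero] using congrArg Prod.snd hc
  simpa [hc0, sub_eq_zero] using congrArg Prod.fst hc

lemma finite_slice_sub_slice [Finite ι] (hA : IsPolygonal A p q) (hα : IsLeast (Prod.snd '' A) α)
    (hβ : IsGreatest (Prod.snd '' A) β) (hα0 : len (horizontalEdges p q) α = 0)
    (hβ0 : len (horizontalEdges p q) β = 0) : (slice A β - slice A α).Finite := by
  have hsnd : ContinuousLinearMap.snd ℝ ℝ ℝ ≠ 0 := fun h => by
    simpa using DFunLike.congr_fun h (0, 1)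
  refine (hA.finite_slice (fun a ha => ?_) hβ0).sub (hA.finite_slice (fun a ha => ?_) hα0)
  · exact notMem_interior_convexHull_of_isMaxOn hsnd (z := (a, β))
      (fun y hy => hβ.2 (mem_image_of_mem _ hy)) (interior_mono (subset_convexHull ℝ A) ha)
  · exact notMem_interior_convexHull_of_isMaxOn (neg_ne_zero.2 hsnd) (z := (a, α))
      (fun y hy => neg_le_neg (hα.2 (mem_image_of_mem _ hy)))
      (interior_mono (subset_convexHull ℝ A) ha)

lemma sum_len_horizontalEdges_le [Finite ι] (hA : IsPolygonal A p q) (hK : Convex ℝ K)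
    (hKc : IsCompact K) (hcov : cov A = cov K) (hα : IsLeast (Prod.snd '' K) α)
    (hβ : IsGreatest (Prod.snd '' K) β) (T : Finset ℝ) :
    ∑ s ∈ T, len (horizontalEdges p q) s ≤ len K α + len K β := by
  refine le_of_forall_pos_le_add fun δ hδ => ?_
  obtain ⟨ε, hε, hε0⟩ := ((eventually_integral_jumpProduct_le hK hKc hα hβ (half_pos hδ)).and
    self_mem_nhdsWithin).exists
  obtain ⟨r, ⟨hupper, hlower⟩, hr0⟩ := ((hε.and
    (hA.eventually_mul_sum_len_le hε0 (half_pos hδ) T)).and self_mem_nhdsWithin).exists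
  rw [integral_jumpProduct hKc, ← hcov, ← integral_jumpProduct hA.isCompact] at hupper
  have h := le_of_mul_le_mul_left (hlower.trans hupper) (mul_pos hε0 hr0)
  linarith

lemma sq_len_add_len_le [Fintype ι] (hA : IsPolygonal A p q) (hK : Convex ℝ K)
    (hKc : IsCompact K) (hcov : cov A = cov K) (hα : IsLeast (Prod.snd '' A) α)
    (hβ : IsGreatest (Prod.snd '' A) β) (hKI : Prod.snd '' K = Icc α' β') (hαβ' : α' < β')
    (hw : β - α = β' - α') :
    (len K α' + len K β') ^ 2 ≤
      ∑ s ∈ Finset.univ.image fun i => (p i).2, len (horizontalEdges p q) s ^ 2 +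
        2 * (len (horizontalEdges p q) α * len (horizontalEdges p q) β) :=
  sq_add_le_of_autocorr_eq hA.lipschitzUpToJumps_len len_nonneg len_nonneg (memLp_len hA.isCompact)
    (fun _ hs => len_eq_zero fun h => hs ⟨hα.2 h, hβ.2 h⟩) (hKI ▸ concaveOn_len hK hKc)
    len_nonneg (memLp_len hKc) (fun _ hs => len_eq_zero (hKI ▸ hs)) hw hαβ' <| funext fun t => by
      rw [← integral_cov_fst hA.isCompact, ← integral_cov_fst hKc, hcov]

lemma le_or_ge_of_horizontal [Finite ι] (hA : IsPolygonal A p q) (hK : Convex ℝ K)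
    (hKc : IsCompact K) (hKi : (interior K).Nonempty) (hcov : cov A = cov K) {i : ι}
    (hi : (p i).2 = (q i).2) : (∀ x ∈ A, x.2 ≤ (p i).2) ∨ ∀ x ∈ A, (p i).2 ≤ x.2 := by
  cases nonempty_fintype ι
  have hpA : p i ∈ A := hA.isCompact.isClosed.frontier_subset <|
    hA.frontier_eq ▸ mem_iUnion_of_mem i (left_mem_segment ℝ _ _)
  have hKreg : K = closure (interior K) := by
    rw [hK.closure_interior_eq_closure_of_nonempty_interior hKi, hKc.isClosed.closure_eq]
  have hdiff : A - A = K - K :=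
    (sub_subset_sub_of_cov_eq hA.isCompact hA.eq_closure_interior hKc hcov).antisymm
      (sub_subset_sub_of_cov_eq hKc hKreg hA.isCompact hcov.symm)
  obtain ⟨α, hα⟩ := (hA.isCompact.image continuous_snd).exists_isLeast ⟨_, mem_image_of_mem _ hpA⟩
  obtain ⟨β, hβ⟩ :=
    (hA.isCompact.image continuous_snd).exists_isGreatest ⟨_, mem_image_of_mem _ hpA⟩
  obtain ⟨α', β', hαβ', hKI⟩ := exists_snd_image_eq_Icc hK hKc hKi
  have hα' : IsLeast (Prod.snd '' K) α' := hKI ▸ isLeast_Icc hαβ'.le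
  have hβ' : IsGreatest (Prod.snd '' K) β' := hKI ▸ isGreatest_Icc hαβ'.le
  have hw : β - α = β' - α' :=
    (isGreatest_snd_image_sub hα hβ).unique (hdiff ▸ isGreatest_snd_image_sub hα' hβ')
  set Λ := len (horizontalEdges p q)
  have hΛi : 0 < Λ (p i).2 := len_horizontalEdges_pos (hA.ne i) hi
  have hsum := hA.sum_len_horizontalEdges_le hK hKc hcov hα' hβ'
  by_contra! ⟨⟨x, hx, hxi⟩, y, hy, hyi⟩
  have hβi : (p i).2 < β := hxi.trans_le (hβ.2 (mem_image_of_mem _ hx))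
  have hαi : α < (p i).2 := (hα.2 (mem_image_of_mem _ hy)).trans_lt hyi
  have hΛαβ : Λ α = 0 ∧ Λ β = 0 := (add_eq_zero_iff_of_nonneg (len_nonneg α) (len_nonneg β)).1 <|
    (nonpos_of_mul_nonpos_left (add_mul_nonpos_of_sum_le len_nonneg hsum
      (hA.sq_len_add_len_le hK hKc hcov hα hβ hKI hαβ' hw) (hαi.trans hβi).ne hαi.ne hβi.ne')
      hΛi).antisymm (add_nonneg (len_nonneg α) (len_nonneg β))
  have hfin : (slice (K - K) (β' - α')).Finite := by
    rw [← hdiff, ← hw, slice_sub_eq hα hβ]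
    exact hA.finite_slice_sub_slice hα hβ hΛαβ.1 hΛαβ.2
  have hle : Λ (p i).2 ≤ 0 := by
    simpa [len_add_len_eq_zero_of_finite hα' hβ' hfin] using hsum {(p i).2}
  exact hle.not_gt hΛi

end IsPolygonal

end HorizontalEdge

section Transport

variable {E F : Type*} [NormedAddCommGroup E] [NormedSpace ℝ E] [NormedAddCommGroup F]
  [NormedSpace ℝ F] {A K : Set E} {ι : Type*} {p q : ι → E}

lemma interior_image_continuousLinearEquiv (Φ : E ≃L[ℝ] F) (A : Set E) :
    interior (Φ '' A) = Φ '' interior A :=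
  (Φ.toHomeomorph.image_interior A).symm

lemma IsPolygonal.image (hA : IsPolygonal A p q) (Φ : E ≃L[ℝ] F) :
    IsPolygonal (Φ '' A) (Φ ∘ p) (Φ ∘ q) where
  isCompact := hA.isCompact.image Φ.continuous
  eq_closure_interior := by
    rw [interior_image_continuousLinearEquiv, ← Φ.image_closure, ← hA.eq_closure_interior]
  ne i := Φ.injective.ne (hA.ne i)
  frontier_eq := by
    have hfr : Φ '' frontier A = frontier (Φ '' A) := Φ.toHomeomorph.image_frontier A
    rw [← hfr, hA.frontier_eq, image_iUnion]
    exact iUnion_congr fun i => image_segment ℝ Φ.toLinearEquiv.toLinearMap.toAffineMap _ _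

lemma exists_continuousLinearEquiv_apply_eq [FiniteDimensional ℝ E] [FiniteDimensional ℝ F]
    (h : Module.finrank ℝ E = Module.finrank ℝ F) {x : E} {y : F} (hx : x ≠ 0) (hy : y ≠ 0) :
    ∃ Φ : E ≃L[ℝ] F, Φ x = y := by
  let Ψ : E ≃L[ℝ] F := .ofFinrankEq h
  obtain ⟨Θ, hΘ⟩ := SeparatingDual.exists_continuousLinearEquiv_apply_eq (R := ℝ)
    (Ψ.map_ne_zero_iff.2 hx) hy
  exact ⟨Ψ.trans Θ, hΘ⟩

variable [MeasureSpace E] [BorelSpace E] [(volume : Measure E).IsAddHaarMeasure]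

lemma cov_image_eq_cov_image [FiniteDimensional ℝ F] [MeasureSpace F] [BorelSpace F]
    [(volume : Measure F).IsAddHaarMeasure] (Φ : E ≃L[ℝ] F) (h : cov A = cov K) :
    cov (Φ '' A) = cov (Φ '' K) := by
  have : (Measure.map Φ volume).IsAddHaarMeasure := Φ.isAddHaarMeasure_map volume
  set c := Measure.addHaarScalarFactor (volume : Measure F) (Measure.map Φ volume)
  have hcov (B : Set E) (x : E) : cov (Φ '' B) (Φ x) = c * cov B x := by
    have hB : Φ '' B ∩ (· + Φ x) ⁻¹' (Φ '' B) = Φ.symm ⁻¹' (B ∩ (· + x) ⁻¹' B) := by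
      ext y
      simp [Φ.image_eq_preimage_symm]
    have hvol (S : Set E) : Measure.map Φ volume (Φ.symm ⁻¹' S) = volume S := by
      rw [← Φ.image_eq_preimage_symm]
      exact (Φ.toHomeomorph.toMeasurableEquiv.map_apply _).trans
        (congrArg volume (Φ.injective.preimage_image S))
    rw [cov, hB, Measure.isAddLeftInvariant_eq_smul volume (Measure.map Φ volume),
      measureReal_nnreal_smul_apply, measureReal_def, hvol, cov, measureReal_def]
  ext y
  rw [← Φ.apply_symm_apply y, hcov, hcov, h]

lemma IsPolygonal.disjoint_frontier_interior_convexHull [Finite ι]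
    (hE : Module.finrank ℝ E = 2) (hA : IsPolygonal A p q) (hK : Convex ℝ K) (hKc : IsCompact K)
    (hKi : (interior K).Nonempty) (hcov : cov A = cov K) :
    Disjoint (frontier A) (interior (convexHull ℝ A)) := by
  have : FiniteDimensional ℝ E := .of_finrank_eq_succ hE
  refine Set.disjoint_left.2 fun z hz => ?_
  obtain ⟨i, hi⟩ := mem_iUnion.1 (hA.frontier_eq ▸ hz)
  obtain ⟨Φ, hΦ⟩ := exists_continuousLinearEquiv_apply_eq (F := ℝ × ℝ) (by simp [hE])
    (sub_ne_zero.2 (hA.ne i).symm) (y := (1, 0)) (by simp)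
  let f : E →L[ℝ] ℝ := .snd ℝ ℝ ℝ ∘L Φ
  have hf0 : f ≠ 0 := fun h => by
    simpa [f] using DFunLike.congr_fun h (Φ.symm (0, 1))
  have hf : f (q i) = f (p i) := by
    rw [← sub_eq_zero, ← map_sub]
    exact congrArg Prod.snd hΦ
  have hfz : f z = f (p i) := by
    obtain ⟨c, hc⟩ := exists_sub_eq_smul_of_mem_segment hi (left_mem_segment ℝ _ _)
    rw [← sub_eq_zero, ← map_sub, hc, map_smul, map_sub, hf, sub_self, smul_zero]
  rcases (hA.image Φ).le_or_ge_of_horizontal (hK.linear_image Φ.toLinearEquiv.toLinearMap)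
    (hKc.image Φ.continuous) (interior_image_continuousLinearEquiv Φ K ▸ hKi.image Φ)
    (cov_image_eq_cov_image Φ hcov) hf.symm with h | h
  · exact notMem_interior_convexHull_of_isMaxOn hf0 fun x hx =>
      (h _ (mem_image_of_mem Φ hx)).trans_eq hfz.symm
  · exact notMem_interior_convexHull_of_isMaxOn (neg_ne_zero.2 hf0) fun x hx =>
      neg_le_neg (hfz.trans_le (h _ (mem_image_of_mem Φ hx)))

end Transport

lemma covariogram_eq_cov_neg (A : Set (EuclideanSpace ℝ (Fin 2))) (x : EuclideanSpace ℝ (Fin 2)) :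
    covariogram A x = cov A (-x) := by
  rw [covariogram, image_add_right, cov, measureReal_def]

end PlanarCovariogram

/-- If `A ⊆ ℝ²` is a regular compact set whose boundary is a finite union of closed
nondegenerate line segments, and `g_A = g_K` for some convex body `K`, then `A` is convex. -/
theorem covariogram_convex_of_polygonal_boundary (A : Set (EuclideanSpace ℝ (Fin 2)))
    (hA : IsCompact A) (hreg : A = closure (interior A))
    (hbd : ∃ (m : ℕ) (p q : Fin m → EuclideanSpace ℝ (Fin 2)),
      (∀ i, p i ≠ q i) ∧ frontier A = ⋃ i, segment ℝ (p i) (q i))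
    (hK : ∃ K : Set (EuclideanSpace ℝ (Fin 2)), IsCompact K ∧ Convex ℝ K ∧
      (interior K).Nonempty ∧ covariogram A = covariogram K) :
    Convex ℝ A := by
  obtain ⟨m, p, q, hpq, hfr⟩ := hbd
  obtain ⟨K, hKc, hK, hKi, hg⟩ := hK
  have hcov : PlanarCovariogram.cov A = PlanarCovariogram.cov K := by
    ext x
    simpa only [PlanarCovariogram.covariogram_eq_cov_neg, neg_neg] using congrFun hg (-x)
  have hAp : PlanarCovariogram.IsPolygonal A p q := ⟨hA, hreg, hpq, hfr⟩
  rcases (interior A).eq_empty_or_nonempty with hempty | hne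
  · rw [hreg, hempty, closure_empty]
    exact convex_empty
  · exact PlanarCovariogram.convex_of_disjoint_frontier_interior_convexHull hA.isClosed hne
      (hAp.disjoint_frontier_interior_convexHull (by simp) hK hKc hKi hcov)
end

section
/- Let D be a bounded Lebesgue-measurable subset of ℝ and r a positive integer. Suppose there exist 2r points a₁ < b₁ < a₂ < b₂ < ... < a_r < b_r, all lying in ℝ \ D, such that λ₁(D ∩ [a_i, b_i]) > 0 for i = 1, ..., r and λ₁(D ∩ [b_i, a_{i+1}]) = 0 for i = 1, ..., r − 1. Then liminf_{h → 0⁺} λ₁(D \ (D + h)) / h ≥ r. -/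
open MeasureTheory Topology Filter Set
open scoped ENNReal
open scoped Function

/-!
If `D` is null on `(a - h, a]`, then, up to a null set, every point of `D ∩ (a, t + h]` is either
the translate by `h` of a point of `D ∩ (a, t]` or a point of `(D \ (D + h)) ∩ (a, t + h]`.
Cancelling `λ₁(D ∩ (a, t])` bounds `λ₁((D \ (D + h)) ∩ (a, t + h])` below by
`λ₁(D ∩ (t, t + h])`, which is asymptotic to `h` when `t` is a right density point of `D`.
So each interval `(a, b]` that meets `D` in positive measure and is preceded by a null gap of `D`
contributes at least `1` to the lower limit. The points `aᵢ`, `bᵢ` give `r` disjoint such intervals;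
the gap before the first one comes from the boundedness of `D`.
-/

theorem measure_inter_le_add_measure_sdiff_translate {G : Type*} [AddGroup G] [MeasurableSpace G]
    [MeasurableAdd G] (μ : Measure G) [μ.IsAddRightInvariant] (D S : Set G) (h : G) :
    μ (D ∩ S) ≤ μ (D ∩ (· + h) ⁻¹' S) + μ ((D \ ((· + h) '' D)) ∩ S) := by
  have hcover : D ∩ S ⊆ (· + h) '' (D ∩ (· + h) ⁻¹' S) ∪ (D \ ((· + h) '' D)) ∩ S := by
    rintro x ⟨hxD, hxS⟩
    by_cases hx : x ∈ (· + h) '' D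
    · obtain ⟨y, hyD, rfl⟩ := hx
      exact Or.inl ⟨y, ⟨hyD, hxS⟩, rfl⟩
    · exact Or.inr ⟨⟨hxD, hx⟩, hxS⟩
  refine (measure_mono hcover).trans ((measure_union_le _ _).trans_eq ?_)
  rw [image_add_right, measure_preimage_add_right]

theorem measure_inter_Ioc_add_measure_inter_Ioc {α : Type*} [LinearOrder α] [TopologicalSpace α]
    [OrderClosedTopology α] [MeasurableSpace α] [OpensMeasurableSpace α] (μ : Measure α)
    (D : Set α) {x y z : α} (hxy : x ≤ y) (hyz : y ≤ z) :
    μ (D ∩ Ioc x y) + μ (D ∩ Ioc y z) = μ (D ∩ Ioc x z) := by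
  have hunion := measure_union (μ := μ.restrict D) (Ioc_disjoint_Ioc_of_le (a := x) (d := z) le_rfl)
    (measurableSet_Ioc (a := y))
  simpa only [Ioc_union_Ioc_eq_Ioc hxy hyz, Measure.restrict_apply measurableSet_Ioc,
    inter_comm _ D] using hunion.symm

theorem measure_inter_Ioc_le_measure_sdiff_translate_inter_Ioc {G : Type*} [AddCommGroup G]
    [LinearOrder G] [IsOrderedAddMonoid G] [TopologicalSpace G] [OrderClosedTopology G]
    [CompactIccSpace G] [MeasurableSpace G] [OpensMeasurableSpace G] [MeasurableAdd G]
    (μ : Measure G) [μ.IsAddRightInvariant] [IsFiniteMeasureOnCompacts μ] {D : Set G} {a t h : G}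
    (hh : 0 ≤ h) (hat : a ≤ t) (hgap : μ (D ∩ Ioc (a - h) a) = 0) :
    μ (D ∩ Ioc t (t + h)) ≤ μ ((D \ ((· + h) '' D)) ∩ Ioc a (t + h)) := by
  have hfin : μ (D ∩ Ioc a t) ≠ ∞ :=
    measure_ne_top_of_subset (inter_subset_right.trans Ioc_subset_Icc_self)
      isCompact_Icc.measure_ne_top
  refine ENNReal.le_of_add_le_add_left hfin ?_
  calc μ (D ∩ Ioc a t) + μ (D ∩ Ioc t (t + h))
      = μ (D ∩ Ioc a (t + h)) :=
        measure_inter_Ioc_add_measure_inter_Ioc μ D hat (le_add_of_nonneg_right hh)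
    _ ≤ μ (D ∩ Ioc (a - h) t) + μ ((D \ ((· + h) '' D)) ∩ Ioc a (t + h)) := by
        simpa only [preimage_add_const_Ioc, add_sub_cancel_right] using
          measure_inter_le_add_measure_sdiff_translate μ D (Ioc a (t + h)) h
    _ = μ (D ∩ Ioc a t) + μ ((D \ ((· + h) '' D)) ∩ Ioc a (t + h)) := by
        rw [← measure_inter_Ioc_add_measure_inter_Ioc μ D (sub_le_self a hh) hat, hgap, zero_add]

theorem exists_mem_tendsto_volume_inter_Ioc_div {D S : Set ℝ} (hDS : volume (D ∩ S) ≠ 0) :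
    ∃ x ∈ S, Tendsto (fun h : ℝ => volume (D ∩ Ioc x (x + h)) / ENNReal.ofReal h)
      (𝓝[>] 0) (𝓝 1) := by
  have hS : ∃ᵐ x ∂volume.restrict D, x ∈ S := by
    refine frequently_ae_mem_iff.2 fun hzero => hDS ?_
    rw [inter_comm]
    exact le_zero_iff.1 ((Measure.le_restrict_apply D S).trans_eq hzero)
  obtain ⟨x, hxS, hx⟩ := (hS.and_eventually <|
    (IsUnifLocDoublingMeasure.vitaliFamily volume 1).ae_tendsto_measure_inter_div D).exists
  have hadd : Tendsto (fun h : ℝ => x + h) (𝓝[>] 0) (𝓝[>] x) := by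
    refine tendsto_nhdsWithin_iff.2 ⟨tendsto_nhdsWithin_of_tendsto_nhds ?_, ?_⟩
    · simpa only [add_zero] using (continuous_const_add x).tendsto 0
    · filter_upwards [self_mem_nhdsWithin] with h hh using lt_add_of_pos_right x hh
  refine ⟨x, hxS, (hx.comp ((Real.tendsto_Icc_vitaliFamily_right x).comp hadd)).congr fun h => ?_⟩
  simp only [Function.comp_apply, Real.volume_Icc, add_sub_cancel_left,
    measure_congr ((ae_eq_refl D).inter Ioc_ae_eq_Icc)]

theorem one_le_liminf_volume_sdiff_translate_inter_Ioc_div {D : Set ℝ} {c a b : ℝ} (hca : c < a)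
    (hgap : volume (D ∩ Icc c a) = 0) (hpos : volume (D ∩ Icc a b) ≠ 0) :
    1 ≤ liminf (fun h : ℝ => volume ((D \ ((· + h) '' D)) ∩ Ioc a b) / ENNReal.ofReal h)
      (𝓝[>] 0) := by
  rw [← measure_congr ((ae_eq_refl D).inter Ico_ae_eq_Icc)] at hpos
  obtain ⟨x, ⟨hax, hxb⟩, hx⟩ := exists_mem_tendsto_volume_inter_Ioc_div hpos
  rw [← hx.liminf_eq]
  refine liminf_le_liminf ?_
  filter_upwards [Ioo_mem_nhdsGT (sub_pos.2 hca), Ioo_mem_nhdsGT (sub_pos.2 hxb)]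
    with h ⟨hh, hhc⟩ ⟨_, hhb⟩
  have hgap' : volume (D ∩ Ioc (a - h) a) = 0 :=
    measure_mono_null (inter_subset_inter_right D <|
      Ioc_subset_Icc_self.trans (Icc_subset_Icc_left (by linarith))) hgap
  refine ENNReal.div_le_div_right ?_ _
  calc volume (D ∩ Ioc x (x + h))
      ≤ volume ((D \ ((· + h) '' D)) ∩ Ioc a (x + h)) :=
        measure_inter_Ioc_le_measure_sdiff_translate_inter_Ioc volume hh.le hax hgap'
    _ ≤ volume ((D \ ((· + h) '' D)) ∩ Ioc a b) := by
        gcongr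
        linarith

theorem tsum_liminf_le_liminf_tsum {ι κ : Type*} {l : Filter κ} [l.IsCountablyGenerated]
    (f : κ → ι → ℝ≥0∞) :
    ∑' i, liminf (fun k => f k i) l ≤ liminf (fun k => ∑' i, f k i) l := by
  -- Fatou's lemma for the counting measure.
  let _ : MeasurableSpace ι := ⊤
  simpa only [lintegral_count] using
    lintegral_liminf_le (μ := Measure.count) (u := l) (f := f) fun _ => measurable_from_top

theorem tsum_measure_inter_le {α ι : Type*} [MeasurableSpace α] (μ : Measure α) (E : Set α)
    {s : ι → Set α} (hs : ∀ i, MeasurableSet (s i)) (hdisj : Pairwise (Disjoint on s)) :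
    ∑' i, μ (E ∩ s i) ≤ μ E := by
  simpa only [Measure.restrict_apply (hs _), inter_comm _ E, Measure.restrict_apply_univ] using
    tsum_measure_le_measure_univ (μ := μ.restrict E) (fun i => (hs i).nullMeasurableSet)
      fun i j hij => (hdisj hij).aedisjoint

theorem card_le_liminf_volume_sdiff_translate_div {D : Set ℝ} {ι : Type*} {a b : ι → ℝ}
    (hdisj : Pairwise (Disjoint on fun i => Ioc (a i) (b i)))
    (hgap : ∀ i, ∃ c < a i, volume (D ∩ Icc c (a i)) = 0)
    (hpos : ∀ i, volume (D ∩ Icc (a i) (b i)) ≠ 0) :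
    (ENat.card ι : ℝ≥0∞) ≤
      liminf (fun h : ℝ => volume (D \ ((· + h) '' D)) / ENNReal.ofReal h) (𝓝[>] 0) := by
  choose c hca hgap using hgap
  calc (ENat.card ι : ℝ≥0∞) = ∑' _ : ι, 1 := by rw [ENNReal.tsum_const, mul_one]
    _ ≤ ∑' i, liminf (fun h : ℝ => volume ((D \ ((· + h) '' D)) ∩ Ioc (a i) (b i)) /
          ENNReal.ofReal h) (𝓝[>] 0) := ENNReal.tsum_le_tsum fun i =>
        one_le_liminf_volume_sdiff_translate_inter_Ioc_div (hca i) (hgap i) (hpos i)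
    _ ≤ liminf (fun h : ℝ => ∑' i, volume ((D \ ((· + h) '' D)) ∩ Ioc (a i) (b i)) /
          ENNReal.ofReal h) (𝓝[>] 0) := tsum_liminf_le_liminf_tsum _
    _ ≤ liminf (fun h : ℝ => volume (D \ ((· + h) '' D)) / ENNReal.ofReal h) (𝓝[>] 0) := by
        refine liminf_le_liminf (Eventually.of_forall fun h => ?_)
        simp only [div_eq_mul_inv, ENNReal.tsum_mul_right]
        gcongr
        exact tsum_measure_inter_le volume _ (fun _ => measurableSet_Ioc) hdisj

theorem right_endpoint_le_left_endpoint_of_lt {α : Type*} [Preorder α] {r : ℕ} {a b : ℕ → α}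
    (hab : ∀ i < r, a i ≤ b i) (hba : ∀ i, i + 1 < r → b i ≤ a (i + 1)) {i j : ℕ} (hij : i < j)
    (hj : j < r) : b i ≤ a j := by
  induction j, hij using Nat.le_induction with
  | base => exact hba i hj
  | succ j _ ih =>
    have hjr : j < r := j.lt_succ_self.trans hj
    exact (ih hjr).trans ((hab j hjr).trans (hba j hj))

theorem exists_lt_le_inter_Icc_eq_empty {α : Type*} [LinearOrder α] [NoMinOrder α] {D : Set α}
    (hD : BddBelow D) (x : α) : ∃ c d, c < d ∧ d ≤ x ∧ D ∩ Icc c d = ∅ := by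
  obtain ⟨m, hm⟩ := hD
  obtain ⟨d, hd⟩ := exists_lt (min m x)
  obtain ⟨c, hcd⟩ := exists_lt d
  refine ⟨c, d, hcd, (hd.trans_le (min_le_right m x)).le, ?_⟩
  exact eq_empty_of_forall_notMem fun y ⟨hyD, _, hyd⟩ =>
    ((hyd.trans_lt hd).trans_le ((min_le_left m x).trans (hm hyD))).false

theorem liminf_measure_sdiff_translate_ge_general {D : Set ℝ} {r : ℕ} {a b : ℕ → ℝ} {c d : ℝ}
    (hcd : c < d) (hda : d ≤ a 0) (hgap : volume (D ∩ Icc c d) = 0)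
    (hba : ∀ i, i + 1 < r → b i < a (i + 1))
    (hpos : ∀ i < r, 0 < volume (D ∩ Icc (a i) (b i)))
    (hzero : ∀ i, i + 1 < r → volume (D ∩ Icc (b i) (a (i + 1))) = 0) :
    (r : ℝ≥0∞) ≤
      liminf (fun h : ℝ => volume (D \ ((· + h) '' D)) / ENNReal.ofReal h) (𝓝[>] 0) := by
  have hab : ∀ i < r, a i ≤ b i := fun i hi =>
    nonempty_Icc.1 ((nonempty_of_measure_ne_zero (hpos i hi).ne').mono inter_subset_right)
  -- The first interval is extended to the left until it is preceded by the gap `[c, d]`.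
  let a' : ℕ → ℝ := Function.update a 0 d
  have ha' : a' ≤ a := update_le_self_iff.2 hda
  have ha'_succ (i : ℕ) : a' (i + 1) = a (i + 1) := Function.update_of_ne i.succ_ne_zero d a
  have hdisj : Pairwise (Disjoint on fun i : Fin r => Ioc (a' i) (b i)) :=
    (pairwise_disjoint_on _).2 fun i j hij => Ioc_disjoint_Ioc_of_le <|
      right_endpoint_le_left_endpoint_of_lt (fun k hk => (ha' k).trans (hab k hk))
        (fun k hk => (hba k hk).le.trans_eq (ha'_succ k).symm) hij j.isLt
  have hgap' : ∀ i : Fin r, ∃ c' < a' i, volume (D ∩ Icc c' (a' i)) = 0 := by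
    rintro ⟨_ | i, hi⟩
    · exact ⟨c, hcd, hgap⟩
    · simp only [ha'_succ]
      exact ⟨b i, hba i hi, hzero i hi⟩
  have hpos' (i : Fin r) : volume (D ∩ Icc (a' i) (b i)) ≠ 0 :=
    ((hpos i i.isLt).trans_le (by gcongr; exact ha' i)).ne'
  simpa using card_le_liminf_volume_sdiff_translate_div hdisj hgap' hpos'

/-- If `D ⊆ ℝ` is bounded and measurable, and there are points
`a₁ < b₁ < a₂ < b₂ < ⋯ < a_r < b_r` outside `D` with `λ₁(D ∩ [aᵢ, bᵢ]) > 0` and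
`λ₁(D ∩ [bᵢ, aᵢ₊₁]) = 0`, then `liminf_{h → 0⁺} λ₁(D \ (D + h)) / h ≥ r`. -/
theorem liminf_measure_sdiff_translate_ge (D : Set ℝ)
    (hmeas : MeasurableSet D) (hbd : Bornology.IsBounded D)
    (r : ℕ) (hr : 0 < r) (a b : ℕ → ℝ)
    (hab : ∀ i < r, a i < b i)
    (hba : ∀ i, i + 1 < r → b i < a (i + 1))
    (haD : ∀ i < r, a i ∉ D) (hbD : ∀ i < r, b i ∉ D)
    (hposi : ∀ i < r, 0 < volume (D ∩ Set.Icc (a i) (b i)))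
    (hzero : ∀ i, i + 1 < r → volume (D ∩ Set.Icc (b i) (a (i + 1))) = 0) :
    (r : ℝ≥0∞) ≤
      liminf (fun h : ℝ => volume (D \ ((· + h) '' D)) / ENNReal.ofReal h) (𝓝[>] 0) := by
  obtain ⟨c, d, hcd, hda, hgap⟩ := exists_lt_le_inter_Icc_eq_empty hbd.bddBelow (a 0)
  exact liminf_measure_sdiff_translate_ge_general hcd hda (by rw [hgap, measure_empty])
    hba hposi hzero
end
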